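/- arXiv:1805.03382 — 3 statements merged into one kernel-verified Lean document; each statement's English description precedes it below -/
import Mathlib

section
/- Let p > q > 1 and δ ∈ [0,1) satisfy (p − q)/(1 − δ) < 1 and (q − δ*p)/(1 − δ) < 1. Then the menu M = {((0,0),0), ((1,1),p), ((1,δ),q)} has revenue strictly less than 1/2 under the uniform distribution on [0,1]^2. -/
open MeasureTheory Real

noncomputable section

/-- Utility of a buyer with value `v = (v₁, v₂)` for a menu item
`it = ((x₁, x₂), p)`, namely `v₁ * x₁ + v₂ * x₂ - p`. -/
def util (v : ℝ × ℝ) (it : (ℝ × ℝ) × ℝ) : ℝ :=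
  v.1 * it.1.1 + v.2 * it.1.2 - it.2

/-- `M` is a menu: every item has allocation in `[0,1]²` and nonnegative price,
and the zero item `((0,0),0)` belongs to `M`. -/
def IsMenu (M : Finset ((ℝ × ℝ) × ℝ)) : Prop :=
  (((0 : ℝ), (0 : ℝ)), (0 : ℝ)) ∈ M ∧
    ∀ it ∈ M, it.1.1 ∈ Set.Icc (0 : ℝ) 1 ∧ it.1.2 ∈ Set.Icc (0 : ℝ) 1 ∧ 0 ≤ it.2

/-- The price paid by a buyer with value `v`: the highest price among the
utility-maximizing menu items of `M`. -/
def buyerPrice (M : Finset ((ℝ × ℝ) × ℝ)) (v : ℝ × ℝ) : ℝ :=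
  sSup {p : ℝ | ∃ it ∈ M, it.2 = p ∧ ∀ it' ∈ M, util v it' ≤ util v it}

/-- Revenue of the menu `M` under the uniform distribution on `[0,1]²`. -/
def rev (M : Finset ((ℝ × ℝ) × ℝ)) : ℝ :=
  ∫ v in Set.Icc ((0 : ℝ), (0 : ℝ)) ((1 : ℝ), (1 : ℝ)), buyerPrice M v

/-!
Suppose every nonzero item of a menu allocates the first good with probability one and costs more
than `1`, and let `w y` be the highest utility available to the buyer with value `(1, y)`. Almost
every buyer `(x, y)` purchases exactly when `1 - w y ≤ x`, and by the envelope theorem then pays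
`1 - w y + y * w' y`, whatever the menu. Integrating out `x`, and then integrating by parts in `y`,
turns the revenue into `∫ (w - 3 / 2 * w ^ 2) + (w 1) ^ 2 / 2`. Since `w` is convex with `w 0 = 0`
and `w' ≤ 1`, it lies between `y - (1 - w 1)` and `w 1 * y`. Comparing the integrand with its value
at `w 1 * y` bounds the revenue by `w 1 - (w 1) ^ 2 / 2 = (1 - (1 - w 1) ^ 2) / 2`, and `w 1 < 1`
because all prices exceed `1`.
-/

section RealIntegrals

lemma sub_three_halves_sq_le {B y t : ℝ} (hB : 0 ≤ B) (hy : 0 ≤ y)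
    (hlower : y - (1 - B) ≤ t) (hupper : t ≤ B * y) :
    t - 3 / 2 * t ^ 2 ≤
      B * y - 3 / 2 * (B * y) ^ 2 + 3 * (B * y) * ((1 - B) * (1 - y)) := by
  have hgap : B * y - t ≤ (1 - B) * (1 - y) := by linarith
  calc t - 3 / 2 * t ^ 2
      = B * y - 3 / 2 * (B * y) ^ 2 + (B * y - t) * (3 / 2 * (t + B * y) - 1) := by ring
    _ ≤ B * y - 3 / 2 * (B * y) ^ 2 + (B * y - t) * (3 * (B * y)) := by
        gcongr
        linarith
    _ ≤ B * y - 3 / 2 * (B * y) ^ 2 + (1 - B) * (1 - y) * (3 * (B * y)) := by gcongr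
    _ = _ := by ring

lemma integral_mul_sub_three_halves_sq_add (B : ℝ) :
    ∫ y in (0 : ℝ)..1, (B * y - 3 / 2 * (B * y) ^ 2 + 3 * (B * y) * ((1 - B) * (1 - y))) =
      B - B ^ 2 := by
  calc _ = ∫ y in (0 : ℝ)..1, ((4 * B - 3 * B ^ 2) * y + (3 / 2 * B ^ 2 - 3 * B) * y ^ 2) := by
        congr with y
        ring
    _ = B - B ^ 2 := by
        rw [intervalIntegral.integral_add (Continuous.intervalIntegrable (by fun_prop) _ _)
            (Continuous.intervalIntegrable (by fun_prop) _ _),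
          intervalIntegral.integral_const_mul, intervalIntegral.integral_const_mul,
          integral_id, integral_pow]
        push_cast
        ring

variable {w : ℝ → ℝ} {a b : ℝ}

lemma setIntegral_Icc_ite_le {t : ℝ} (ht : t ∈ Set.Icc a b) (c : ℝ) :
    ∫ x in Set.Icc a b, (if t ≤ x then c else 0) = (b - t) * c := by
  have hset : Set.Icc a b ∩ Set.Ici t = Set.Icc t b := by
    rw [← Set.Ici_inter_Iic, Set.inter_right_comm, Set.Ici_inter_Ici, sup_of_le_right ht.1,
      Set.Ici_inter_Iic]
  calc ∫ x in Set.Icc a b, (if t ≤ x then c else 0)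
      = ∫ x in Set.Icc a b, (Set.Ici t).indicator (fun _ => c) x := rfl
    _ = (b - t) * c := by
        rw [setIntegral_indicator measurableSet_Ici, hset, setIntegral_const,
          Real.volume_real_Icc_of_le ht.2, smul_eq_mul]

lemma integral_half_sq_add_id_mul_mul_deriv (hw : AbsolutelyContinuousOnInterval w a b) :
    ∫ y in a..b, (w y ^ 2 / 2 + y * (w y * deriv w y)) = b * w b ^ 2 / 2 - a * w a ^ 2 / 2 := by
  have hid : AbsolutelyContinuousOnInterval (fun y : ℝ => y / 2) a b := by
    have hLip : LipschitzOnWith 1 (fun y : ℝ => y) (Set.uIcc a b) :=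
      LipschitzWith.id.lipschitzOnWith
    simpa [div_eq_inv_mul] using hLip.absolutelyContinuousOnInterval.const_mul (1 / 2 : ℝ)
  have hparts := (hid.fun_mul (hw.fun_mul hw)).integral_deriv_eq_sub
  calc ∫ y in a..b, (w y ^ 2 / 2 + y * (w y * deriv w y))
      = ∫ y in a..b, deriv (fun y => y / 2 * (w y * w y)) y := by
        refine intervalIntegral.integral_congr_ae ?_
        filter_upwards [hw.ae_differentiableAt] with y hdiff hy
        have hwy := (hdiff (Set.uIoc_subset_uIcc hy)).hasDerivAt
        rw [(((hasDerivAt_id' y).div_const 2).fun_mul (hwy.fun_mul hwy)).deriv]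
        ring
    _ = b * w b ^ 2 / 2 - a * w a ^ 2 / 2 := by rw [hparts]; ring

lemma integral_mul_one_sub_add_id_mul_deriv (hw : AbsolutelyContinuousOnInterval w a b) :
    ∫ y in a..b, w y * (1 - w y + y * deriv w y) =
      (∫ y in a..b, (w y - 3 / 2 * w y ^ 2)) + (b * w b ^ 2 / 2 - a * w a ^ 2 / 2) := by
  have hcont := hw.continuousOn
  have hderiv : IntervalIntegrable (fun y => y * (w y * deriv w y)) volume a b :=
    (hw.intervalIntegrable_deriv.continuousOn_mul hcont).continuousOn_mul continuousOn_id
  rw [← integral_half_sq_add_id_mul_mul_deriv hw, ← intervalIntegral.integral_add]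
  · congr with y
    ring
  · exact ContinuousOn.intervalIntegrable (by fun_prop)
  · exact (ContinuousOn.intervalIntegrable (by fun_prop)).add hderiv

lemma integral_mul_one_sub_add_id_mul_deriv_le (hw : AbsolutelyContinuousOnInterval w 0 1)
    (hw1 : 0 ≤ w 1) (hlower : ∀ y ∈ Set.Icc (0 : ℝ) 1, y - (1 - w 1) ≤ w y)
    (hupper : ∀ y ∈ Set.Icc (0 : ℝ) 1, w y ≤ w 1 * y) :
    ∫ y in (0 : ℝ)..1, w y * (1 - w y + y * deriv w y) ≤ w 1 - w 1 ^ 2 / 2 := by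
  set B := w 1
  have hcont := hw.continuousOn
  have hmono : ∫ y in (0 : ℝ)..1, (w y - 3 / 2 * w y ^ 2) ≤
      ∫ y in (0 : ℝ)..1,
        (B * y - 3 / 2 * (B * y) ^ 2 + 3 * (B * y) * ((1 - B) * (1 - y))) := by
    refine intervalIntegral.integral_mono_on zero_le_one
      (ContinuousOn.intervalIntegrable (by fun_prop))
      (Continuous.intervalIntegrable (by fun_prop) _ _) fun y hy => ?_
    exact sub_three_halves_sq_le hw1 hy.1 (hlower y hy) (hupper y hy)
  calc ∫ y in (0 : ℝ)..1, w y * (1 - w y + y * deriv w y)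
      = (∫ y in (0 : ℝ)..1, (w y - 3 / 2 * w y ^ 2)) + B ^ 2 / 2 := by
        rw [integral_mul_one_sub_add_id_mul_deriv hw]
        ring
    _ ≤ B - B ^ 2 / 2 := by linarith [integral_mul_sub_three_halves_sq_add B]

end RealIntegrals

/-- The item `it` is a utility-maximizing choice from the menu `M` for the buyer with value `v`. -/
def IsBestResponse (M : Finset ((ℝ × ℝ) × ℝ)) (v : ℝ × ℝ) (it : (ℝ × ℝ) × ℝ) : Prop :=
  it ∈ M ∧ ∀ it' ∈ M, util v it' ≤ util v it

/-- The indirect utility of the menu `M` along the edge `v₁ = 1` of the unit square, as a function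
of the value `y` of the second good. The supremum is a maximum when `M` is nonempty. -/
def edgeUtility (M : Finset ((ℝ × ℝ) × ℝ)) (y : ℝ) : ℝ :=
  ⨆ it : M, util (1, y) it

/-- The payment of the buyer with value `v` as predicted by the envelope theorem from
`edgeUtility M`, for a menu selling the first good only with probability one. It uses the
convention `deriv f y = 0` at the (null set of) kinks `y` of `edgeUtility M`. -/
def envelopePrice (M : Finset ((ℝ × ℝ) × ℝ)) (v : ℝ × ℝ) : ℝ :=
  if 1 - edgeUtility M v.2 ≤ v.1 then
    1 - edgeUtility M v.2 + v.2 * deriv (edgeUtility M) v.2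
  else 0

section Menu

variable {M : Finset ((ℝ × ℝ) × ℝ)} {it : (ℝ × ℝ) × ℝ} {x x' y : ℝ}

lemma util_le_edgeUtility (hit : it ∈ M) (y : ℝ) : util (1, y) it ≤ edgeUtility M y :=
  le_ciSup (f := fun it : M => util (1, y) it) (Set.finite_range _).bddAbove ⟨it, hit⟩

lemma IsMenu.edgeUtility_le (hM : IsMenu M) {c : ℝ} (h : ∀ it ∈ M, util (1, y) it ≤ c) :
    edgeUtility M y ≤ c :=
  have : Nonempty M := ⟨⟨_, hM.1⟩⟩
  ciSup_le fun it => h it it.2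

lemma IsMenu.exists_util_eq_edgeUtility (hM : IsMenu M) (y : ℝ) :
    ∃ it ∈ M, util (1, y) it = edgeUtility M y :=
  have : Nonempty M := ⟨⟨_, hM.1⟩⟩
  have ⟨it, h⟩ := exists_eq_ciSup_of_finite (f := fun it : M => util (1, y) it)
  ⟨it, it.2, h⟩

lemma IsMenu.edgeUtility_nonneg (hM : IsMenu M) (y : ℝ) : 0 ≤ edgeUtility M y := by
  simpa [util] using util_le_edgeUtility hM.1 y

lemma IsMenu.monotone_edgeUtility (hM : IsMenu M) : Monotone (edgeUtility M) := by
  refine fun y z hyz => hM.edgeUtility_le fun it hit => (util_le_edgeUtility hit z).trans' ?_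
  have := mul_le_mul_of_nonneg_right hyz (hM.2 it hit).2.1.1
  simp only [util]
  linarith

lemma IsMenu.lipschitzWith_edgeUtility (hM : IsMenu M) : LipschitzWith 1 (edgeUtility M) := by
  refine LipschitzWith.of_le_add fun y z => hM.edgeUtility_le fun it hit => ?_
  have hshift : (y - z) * it.1.2 ≤ dist y z :=
    calc (y - z) * it.1.2 ≤ |y - z| * it.1.2 :=
          mul_le_mul_of_nonneg_right (le_abs_self _) (hM.2 it hit).2.1.1
      _ ≤ dist y z := mul_le_of_le_one_right (abs_nonneg _) (hM.2 it hit).2.1.2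
  calc util (1, y) it = util (1, z) it + (y - z) * it.1.2 := by simp only [util]; ring
    _ ≤ edgeUtility M z + dist y z := add_le_add (util_le_edgeUtility hit z) hshift

lemma IsMenu.deriv_edgeUtility_le_one (hM : IsMenu M) (y : ℝ) : deriv (edgeUtility M) y ≤ 1 :=
  (le_abs_self _).trans (norm_deriv_le_of_lipschitz hM.lipschitzWith_edgeUtility)

lemma IsMenu.sub_le_edgeUtility (hM : IsMenu M) (hy : y ≤ 1) :
    y - (1 - edgeUtility M 1) ≤ edgeUtility M y := by
  have hdist := hM.lipschitzWith_edgeUtility.dist_le_mul 1 y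
  rw [Real.dist_eq, Real.dist_eq, abs_of_nonneg (sub_nonneg.2 hy), NNReal.coe_one] at hdist
  linarith [le_abs_self (edgeUtility M 1 - edgeUtility M y)]

lemma IsMenu.edgeUtility_le_mul (hM : IsMenu M) (hprice : ∀ it ∈ M, it.1.1 ≤ it.2)
    (hy : y ∈ Set.Icc (0 : ℝ) 1) : edgeUtility M y ≤ edgeUtility M 1 * y := by
  refine hM.edgeUtility_le fun it hit => ?_
  calc util (1, y) it = util (1, 1) it * y + (1 - y) * (it.1.1 - it.2) := by
        simp only [util]; ring
    _ ≤ util (1, 1) it * y :=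
        add_le_of_nonpos_right (mul_nonpos_of_nonneg_of_nonpos (sub_nonneg.2 hy.2)
          (sub_nonpos.2 (hprice it hit)))
    _ ≤ edgeUtility M 1 * y := mul_le_mul_of_nonneg_right (util_le_edgeUtility hit 1) hy.1

lemma IsMenu.edgeUtility_le_one (hM : IsMenu M) (hprice : ∀ it ∈ M, it.1.1 ≤ it.2)
    (hy : y ≤ 1) : edgeUtility M y ≤ 1 := by
  refine hM.edgeUtility_le fun it hit => ?_
  have hy' : y * it.1.2 ≤ 1 := mul_le_one₀ hy (hM.2 it hit).2.1.1 (hM.2 it hit).2.1.2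
  simp only [util]
  linarith [hprice it hit]

lemma IsBestResponse.util_eq_edgeUtility (hM : IsMenu M) (h : IsBestResponse M (1, y) it) :
    util (1, y) it = edgeUtility M y :=
  (util_le_edgeUtility h.1 y).antisymm (hM.edgeUtility_le h.2)

lemma IsBestResponse.mono_fst (hM : IsMenu M) (h : IsBestResponse M (x, y) it)
    (hfull : it.1.1 = 1) (hx : x ≤ x') : IsBestResponse M (x', y) it := by
  refine ⟨h.1, fun it' hit' => ?_⟩
  have hle := h.2 it' hit'
  have hslope := mul_le_of_le_one_right (sub_nonneg.2 hx) (hM.2 it' hit').1.2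
  simp only [util, hfull] at hle ⊢
  linarith

lemma IsBestResponse.deriv_edgeUtility (hM : IsMenu M) (h : IsBestResponse M (1, y) it)
    (hdiff : DifferentiableAt ℝ (edgeUtility M) y) : deriv (edgeUtility M) y = it.1.2 := by
  have hutil : HasDerivAt (fun z => util (1, z) it) it.1.2 y := by
    simpa [util] using (((hasDerivAt_id' y).mul_const it.1.2).const_add (1 * it.1.1)).sub_const it.2
  have hmin : IsLocalMin (fun z => edgeUtility M z - util (1, z) it) y := by
    refine Filter.Eventually.of_forall fun z => ?_
    simpa [h.util_eq_edgeUtility hM] using util_le_edgeUtility h.1 z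
  exact sub_eq_zero.1 (hmin.hasDerivAt_eq_zero (hdiff.hasDerivAt.sub hutil))

lemma IsBestResponse.price_eq_envelopePrice (hM : IsMenu M) (h : IsBestResponse M (x, y) it)
    (hfull : it.1.1 = 1) (hx : x ≤ 1) (hdiff : DifferentiableAt ℝ (edgeUtility M) y) :
    it.2 = envelopePrice M (x, y) := by
  have hedge := h.mono_fst hM hfull hx
  have hutil := hedge.util_eq_edgeUtility hM
  have hzero := h.2 _ hM.1
  simp only [util, hfull] at hutil hzero
  rw [envelopePrice, if_pos (by linarith), hedge.deriv_edgeUtility hM hdiff]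
  linarith

lemma IsMenu.envelopePrice_nonneg (hM : IsMenu M) (hprice : ∀ it ∈ M, it.1.1 ≤ it.2)
    (hy : y ∈ Set.Icc (0 : ℝ) 1) : 0 ≤ envelopePrice M (x, y) := by
  have hderiv := mul_nonneg hy.1 (hM.monotone_edgeUtility.deriv_nonneg (x := y))
  have hle := hM.edgeUtility_le_one hprice hy.2
  rw [envelopePrice]
  split_ifs <;> linarith

lemma IsMenu.envelopePrice_le_two (hM : IsMenu M) (hy : y ∈ Set.Icc (0 : ℝ) 1) :
    envelopePrice M (x, y) ≤ 2 := by
  have hderiv : y * deriv (edgeUtility M) y ≤ 1 :=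
    mul_le_one₀ hy.2 hM.monotone_edgeUtility.deriv_nonneg (hM.deriv_edgeUtility_le_one y)
  rw [envelopePrice]
  split_ifs <;> linarith [hM.edgeUtility_nonneg y]

lemma IsMenu.measurable_envelopePrice (hM : IsMenu M) : Measurable (envelopePrice M) := by
  have hmeas : Measurable (edgeUtility M) := hM.monotone_edgeUtility.measurable
  exact Measurable.ite (measurableSet_le (by fun_prop) (by fun_prop)) (by fun_prop) (by fun_prop)

lemma IsMenu.integrableOn_envelopePrice (hM : IsMenu M) (hprice : ∀ it ∈ M, it.1.1 ≤ it.2) :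
    IntegrableOn (envelopePrice M) (Set.Icc ((0 : ℝ), (0 : ℝ)) ((1 : ℝ), (1 : ℝ))) := by
  refine Measure.integrableOn_of_bounded (M := 2) isCompact_Icc.measure_lt_top.ne
    hM.measurable_envelopePrice.aestronglyMeasurable ?_
  filter_upwards [ae_restrict_mem measurableSet_Icc] with v hv
  have hy : v.2 ∈ Set.Icc (0 : ℝ) 1 := ⟨hv.1.2, hv.2.2⟩
  rw [Real.norm_of_nonneg (hM.envelopePrice_nonneg hprice hy)]
  exact hM.envelopePrice_le_two hy

lemma IsMenu.buyerPrice_nonneg (hM : IsMenu M) (v : ℝ × ℝ) : 0 ≤ buyerPrice M v := by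
  refine Real.sSup_nonneg ?_
  rintro _ ⟨it, hit, rfl, -⟩
  exact (hM.2 it hit).2.2

lemma IsMenu.buyerPrice_le_envelopePrice (hM : IsMenu M) (hprice : ∀ it ∈ M, it.1.1 ≤ it.2)
    (hfull : ∀ it ∈ M, it ≠ 0 → it.1.1 = 1) (hx : x ≤ 1) (hy : y ∈ Set.Icc (0 : ℝ) 1)
    (hdiff : DifferentiableAt ℝ (edgeUtility M) y) :
    buyerPrice M (x, y) ≤ envelopePrice M (x, y) := by
  have hnonneg : 0 ≤ envelopePrice M (x, y) := hM.envelopePrice_nonneg hprice hy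
  refine Real.sSup_le ?_ hnonneg
  rintro _ ⟨it, hit, rfl, hbest⟩
  rcases eq_or_ne it 0 with rfl | hne
  · exact hnonneg
  · exact (IsBestResponse.price_eq_envelopePrice hM ⟨hit, hbest⟩ (hfull it hit hne) hx hdiff).le

lemma IsMenu.setIntegral_envelopePrice (hM : IsMenu M) (hprice : ∀ it ∈ M, it.1.1 ≤ it.2) :
    ∫ v in Set.Icc ((0 : ℝ), (0 : ℝ)) ((1 : ℝ), (1 : ℝ)), envelopePrice M v =
      ∫ y in (0 : ℝ)..1,
        edgeUtility M y * (1 - edgeUtility M y + y * deriv (edgeUtility M) y) := by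
  have hint := hM.integrableOn_envelopePrice hprice
  rw [← Set.Icc_prod_Icc, Measure.volume_eq_prod, IntegrableOn, ← Measure.prod_restrict] at hint
  rw [← Set.Icc_prod_Icc, Measure.volume_eq_prod, ← Measure.prod_restrict,
    integral_prod_symm _ hint, intervalIntegral.integral_of_le zero_le_one,
    ← integral_Icc_eq_integral_Ioc]
  refine setIntegral_congr_fun measurableSet_Icc fun y hy => ?_
  have hthreshold : 1 - edgeUtility M y ∈ Set.Icc (0 : ℝ) 1 :=
    ⟨sub_nonneg.2 (hM.edgeUtility_le_one hprice hy.2), sub_le_self _ (hM.edgeUtility_nonneg y)⟩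
  simpa [envelopePrice] using setIntegral_Icc_ite_le hthreshold
    (1 - edgeUtility M y + y * deriv (edgeUtility M) y)

lemma IsMenu.rev_le_setIntegral_envelopePrice (hM : IsMenu M)
    (hprice : ∀ it ∈ M, it.1.1 ≤ it.2) (hfull : ∀ it ∈ M, it ≠ 0 → it.1.1 = 1) :
    rev M ≤ ∫ v in Set.Icc ((0 : ℝ), (0 : ℝ)) ((1 : ℝ), (1 : ℝ)), envelopePrice M v := by
  have hdiff : ∀ᵐ v : ℝ × ℝ, DifferentiableAt ℝ (edgeUtility M) v.2 :=
    Measure.quasiMeasurePreserving_snd.ae hM.lipschitzWith_edgeUtility.ae_differentiableAt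
  refine integral_mono_of_nonneg (.of_forall hM.buyerPrice_nonneg)
    (hM.integrableOn_envelopePrice hprice) ?_
  filter_upwards [ae_restrict_mem measurableSet_Icc, ae_restrict_of_ae hdiff] with v hv hvdiff
  exact hM.buyerPrice_le_envelopePrice hprice hfull hv.2.1 ⟨hv.1.2, hv.2.2⟩ hvdiff

theorem IsMenu.rev_le_edgeUtility_one (hM : IsMenu M) (hprice : ∀ it ∈ M, it.1.1 ≤ it.2)
    (hfull : ∀ it ∈ M, it ≠ 0 → it.1.1 = 1) :
    rev M ≤ edgeUtility M 1 - edgeUtility M 1 ^ 2 / 2 :=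
  calc rev M
      ≤ ∫ v in Set.Icc ((0 : ℝ), (0 : ℝ)) ((1 : ℝ), (1 : ℝ)), envelopePrice M v :=
        hM.rev_le_setIntegral_envelopePrice hprice hfull
    _ = ∫ y in (0 : ℝ)..1,
          edgeUtility M y * (1 - edgeUtility M y + y * deriv (edgeUtility M) y) :=
        hM.setIntegral_envelopePrice hprice
    _ ≤ edgeUtility M 1 - edgeUtility M 1 ^ 2 / 2 :=
        integral_mul_one_sub_add_id_mul_deriv_le
          hM.lipschitzWith_edgeUtility.lipschitzOnWith.absolutelyContinuousOnInterval
          (hM.edgeUtility_nonneg 1) (fun _ hy => hM.sub_le_edgeUtility hy.2)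
          (fun _ hy => hM.edgeUtility_le_mul hprice hy)

lemma IsMenu.edgeUtility_one_lt_one (hM : IsMenu M)
    (hpremium : ∀ it ∈ M, it ≠ 0 → 1 < it.2) : edgeUtility M 1 < 1 := by
  obtain ⟨it, hit, hutil⟩ := hM.exists_util_eq_edgeUtility 1
  rw [← hutil]
  rcases eq_or_ne it 0 with rfl | hne
  · simp [util]
  · have hitem := hM.2 it hit
    simp only [util]
    linarith [hpremium it hit hne, hitem.1.2, hitem.2.1.2]

theorem case3_three_menu_general (hM : IsMenu M)
    (hitem : ∀ it ∈ M, it ≠ 0 → it.1.1 = 1 ∧ 1 < it.2) : rev M < 1 / 2 := by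
  have hprice : ∀ it ∈ M, it.1.1 ≤ it.2 := by
    intro it hit
    rcases eq_or_ne it 0 with rfl | hne
    · simp
    · exact (hitem it hit hne).1.trans_le (hitem it hit hne).2.le
  have hrev := hM.rev_le_edgeUtility_one hprice fun it hit hne => (hitem it hit hne).1
  have hlt := hM.edgeUtility_one_lt_one fun it hit hne => (hitem it hit hne).2
  nlinarith [sq_pos_of_pos (sub_pos.2 hlt)]

end Menu

/-- Case 3: for `p > q > 1` and `δ ∈ [0,1)` with
`(p-q)/(1-δ) < 1` and `(q-δp)/(1-δ) < 1`, the menu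
`{((0,0),0), ((1,1),p), ((1,δ),q)}` has revenue strictly less than `1/2`. -/
theorem case3_three_menu (p q δ : ℝ)
    (hq1 : 1 < q) (hqp : q < p)
    (hδ0 : 0 ≤ δ) (hδ1 : δ < 1)
    (hA : (p - q) / (1 - δ) < 1)
    (hB : (q - δ * p) / (1 - δ) < 1) :
    rev {(((0 : ℝ), (0 : ℝ)), (0 : ℝ)),
         (((1 : ℝ), (1 : ℝ)), p),
         (((1 : ℝ), δ), q)} < 1 / 2 := by
  have hMenu : IsMenu {((0, 0), 0), ((1, 1), p), ((1, δ), q)} := by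
    simp [IsMenu, hδ0, hδ1.le, (one_pos.trans hq1).le, (one_pos.trans (hq1.trans hqp)).le]
  exact case3_three_menu_general hMenu (by simp [hq1, hq1.trans hqp])
end
end

section
/- Let c > 4/3. Every incentive compatible and individually rational direct mechanism on the triangle T = {(v1,v2) : v1 ≥ 0, v2 ≥ 0, v1/c + v2 ≤ 1} with the uniform distribution μ on T has revenue at most (2/27)*(4 + c + sqrt(c*(c−1))). -/
open MeasureTheory Real

noncomputable section

/-- The triangle `T = {(v₁,v₂) : v₁ ≥ 0, v₂ ≥ 0, v₁/c + v₂ ≤ 1}`. -/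
def Tri (c : ℝ) : Set (ℝ × ℝ) := {v | 0 ≤ v.1 ∧ 0 ≤ v.2 ∧ v.1 / c + v.2 ≤ 1}

/-- The uniform probability measure on the triangle `Tri c`, i.e. the measure
with density `2 / c` with respect to Lebesgue measure, restricted to `Tri c`. -/
def triMeasure (c : ℝ) : Measure (ℝ × ℝ) :=
  ENNReal.ofReal (2 / c) • (volume.restrict (Tri c))

/-- Revenue of the menu `M` under the uniform distribution on the triangle `Tri c`. -/
def revTri (c : ℝ) (M : Finset ((ℝ × ℝ) × ℝ)) : ℝ :=
  ∫ v, buyerPrice M v ∂(triMeasure c)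

/-!
Let `u` be the indirect utility of the mechanism. The envelope theorem makes `p v + u v` the
derivative of `u (l • v)` at `l = 1`; integrating over the triangle and comparing with the
derivative of `∫ u (l • v)` computed in polar form gives
`∫_T p = c * ∫₀¹ u (edge c s) - 3 * ∫_T u`, where `edge` parametrises the hypotenuse.

To bound `∫_T u` from below by the hypotenuse term, join a curve inside `T` to the hypotenuse by
segments, each carrying the mass `c / 3` per unit of `s`. Since `u` has slopes in `[0, 1]`, along a
segment it falls short of its value on the hypotenuse by at most the `ℓ¹` distance, and `u ≥ 0`
below the curve. The terms in `u` then cancel. The curve is the boundary of the region where the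
optimal mechanism sells nothing: a piece of `v₁ / c + v₂ = 2 / 3` with vertical segments above it,
and a piece of slope `-1`, whose position is determined by the mass condition.
-/

/-- `u` is nondecreasing in each coordinate with slopes at most `1`: the shape of the indirect
utility of a buyer whose allocations lie in `[0,1]²`. The positive parts encode both the
monotonicity and the slope bound in a single inequality. -/
def UnitSlope (u : ℝ × ℝ → ℝ) : Prop :=
  ∀ v w, u w ≤ u v + (w.1 - v.1)⁺ + (w.2 - v.2)⁺

lemma UnitSlope.lipschitzWith {u : ℝ × ℝ → ℝ} (hu : UnitSlope u) : LipschitzWith 2 u := by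
  refine LipschitzWith.of_le_add_mul 2 fun v w ↦ ?_
  have h₁ : (v.1 - w.1)⁺ ≤ dist v w :=
    sup_le ((le_abs_self _).trans (le_max_left _ _)) dist_nonneg
  have h₂ : (v.2 - w.2)⁺ ≤ dist v w :=
    sup_le ((le_abs_self _).trans (le_max_right _ _)) dist_nonneg
  push_cast
  linarith [hu w v]

lemma UnitSlope.continuous {u : ℝ × ℝ → ℝ} (hu : UnitSlope u) : Continuous u :=
  hu.lipschitzWith.continuous

lemma UnitSlope.le_add_of_le {u : ℝ × ℝ → ℝ} (hu : UnitSlope u) {v w : ℝ × ℝ} (hvw : v ≤ w) :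
    u w ≤ u v + (w.1 - v.1) + (w.2 - v.2) := by
  simpa only [posPart_of_nonneg (sub_nonneg.2 hvw.1), posPart_of_nonneg (sub_nonneg.2 hvw.2)]
    using hu v w

lemma mul_le_posPart {a y : ℝ} (hy : y ∈ Set.Icc (0 : ℝ) 1) : a * y ≤ a⁺ :=
  calc a * y ≤ a⁺ * y := mul_le_mul_of_nonneg_right (le_posPart a) hy.1
    _ ≤ a⁺ := mul_le_of_le_one_right (posPart_nonneg a) hy.2

lemma unitSlope_util {it : (ℝ × ℝ) × ℝ} (h₁ : it.1.1 ∈ Set.Icc (0 : ℝ) 1)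
    (h₂ : it.1.2 ∈ Set.Icc (0 : ℝ) 1) : UnitSlope (util · it) := by
  intro v w
  have h₁ := mul_le_posPart (a := w.1 - v.1) h₁
  have h₂ := mul_le_posPart (a := w.2 - v.2) h₂
  simp only [util]
  linarith

lemma unitSlope_iSup {ι : Type*} [Nonempty ι] {f : ι → ℝ × ℝ → ℝ} (hf : ∀ i, UnitSlope (f i))
    (hbdd : ∀ v, BddAbove (Set.range fun i ↦ f i v)) : UnitSlope fun v ↦ ⨆ i, f i v := by
  refine fun v w ↦ ciSup_le fun i ↦ ?_
  linarith [hf i v w, le_ciSup (hbdd v) i]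

/-- The direct mechanism with allocation rule `x` and payment rule `p` on the type space `T`
allocates at most one unit of each good and is incentive compatible. -/
structure IsICMechanism (T : Set (ℝ × ℝ)) (x : ℝ × ℝ → ℝ × ℝ) (p : ℝ × ℝ → ℝ) : Prop where
  alloc_mem : ∀ v ∈ T, (x v).1 ∈ Set.Icc (0 : ℝ) 1 ∧ (x v).2 ∈ Set.Icc (0 : ℝ) 1
  util_le : ∀ v ∈ T, ∀ v' ∈ T, util v (x v', p v') ≤ util v (x v, p v)

/-- The best utility that a buyer with value `v` can reach by reporting a type in `T`. The value
`v` itself may lie outside `T`, so that dilating `v` needs no case distinction. -/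
def indirectUtility (T : Set (ℝ × ℝ)) (x : ℝ × ℝ → ℝ × ℝ) (p : ℝ × ℝ → ℝ) (v : ℝ × ℝ) : ℝ :=
  ⨆ v' : T, util v (x v', p v')

namespace IsICMechanism

variable {T : Set (ℝ × ℝ)} {x : ℝ × ℝ → ℝ × ℝ} {p : ℝ × ℝ → ℝ} {v : ℝ × ℝ}

lemma bddAbove_range_util (hM : IsICMechanism T x p) (w : ℝ × ℝ) :
    BddAbove (Set.range fun v' : T ↦ util w (x v', p v')) := by
  rcases T.eq_empty_or_nonempty with rfl | ⟨v, hv⟩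
  · exact (Set.finite_range _).bddAbove
  · refine ⟨util v (x v, p v) + (w.1 - v.1)⁺ + (w.2 - v.2)⁺, ?_⟩
    rintro _ ⟨⟨v', hv'⟩, rfl⟩
    have hslope := unitSlope_util (it := (x v', p v')) (hM.alloc_mem v' hv').1
      (hM.alloc_mem v' hv').2 v w
    linarith [hM.util_le v hv v' hv']

lemma util_le_indirectUtility (hM : IsICMechanism T x p) (hv : v ∈ T) (w : ℝ × ℝ) :
    util w (x v, p v) ≤ indirectUtility T x p w :=
  le_ciSup (hM.bddAbove_range_util w) ⟨v, hv⟩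

lemma indirectUtility_eq (hM : IsICMechanism T x p) (hv : v ∈ T) :
    indirectUtility T x p v = util v (x v, p v) :=
  have : Nonempty T := ⟨⟨v, hv⟩⟩
  le_antisymm (ciSup_le fun v' ↦ hM.util_le v hv v' v'.2) (hM.util_le_indirectUtility hv v)

lemma unitSlope_indirectUtility (hM : IsICMechanism T x p) (hT : T.Nonempty) :
    UnitSlope (indirectUtility T x p) :=
  have := hT.to_subtype
  unitSlope_iSup
    (fun v' ↦ unitSlope_util (hM.alloc_mem v' v'.2).1 (hM.alloc_mem v' v'.2).2)
    hM.bddAbove_range_util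

lemma indirectUtility_dilation_ge (hM : IsICMechanism T x p) (hv : v ∈ T) (l : ℝ) :
    indirectUtility T x p v + (l - 1) * (p v + indirectUtility T x p v)
      ≤ indirectUtility T x p (l • v) := by
  calc _ = util (l • v) (x v, p v) := by
        simp only [hM.indirectUtility_eq hv, util, Prod.smul_fst, Prod.smul_snd, smul_eq_mul]
        ring
    _ ≤ _ := hM.util_le_indirectUtility hv _

end IsICMechanism

lemma hasDerivAt_of_forall_add_mul_le {f : ℝ → ℝ} {x₀ a : ℝ} (hf : DifferentiableAt ℝ f x₀)
    (hline : ∀ y, f x₀ + (y - x₀) * a ≤ f y) : HasDerivAt f a x₀ := by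
  have hmin : IsLocalMin (fun y ↦ f y - y * a) x₀ :=
    Filter.Eventually.of_forall fun y ↦ by linarith [hline y]
  have hderiv := hmin.hasDerivAt_eq_zero (hf.hasDerivAt.sub (hasDerivAt_mul_const a))
  exact sub_eq_zero.1 hderiv ▸ hf.hasDerivAt

section Dilation

variable {E : Type*} [NormedAddCommGroup E] [NormedSpace ℝ E] [FiniteDimensional ℝ E]
  [MeasurableSpace E] [BorelSpace E] {μ : Measure E} [μ.IsAddHaarMeasure]
  {u g : E → ℝ} {C : NNReal} {S : Set E}

lemma ae_hasDerivAt_dilation (hu : LipschitzWith C u) (hS : MeasurableSet S)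
    (hg : ∀ v ∈ S, ∀ l : ℝ, u v + (l - 1) * g v ≤ u (l • v)) :
    ∀ᵐ v ∂μ.restrict S, HasDerivAt (fun l : ℝ ↦ u (l • v)) (g v) 1 := by
  filter_upwards [ae_restrict_of_ae hu.ae_differentiableAt, ae_restrict_mem hS] with v hdiff hv
  refine hasDerivAt_of_forall_add_mul_le ?_ (by simpa only [one_smul] using hg v hv)
  exact DifferentiableAt.comp (1 : ℝ) (by rwa [one_smul]) (by fun_prop)

lemma hasDerivAt_setIntegral_dilation (hu : LipschitzWith C u) (hS : MeasurableSet S)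
    (hSb : Bornology.IsBounded S) (hg : ∀ v ∈ S, ∀ l : ℝ, u v + (l - 1) * g v ≤ u (l • v)) :
    IntegrableOn g S μ ∧
      HasDerivAt (fun l : ℝ ↦ ∫ v in S, u (l • v) ∂μ) (∫ v in S, g v ∂μ) 1 := by
  have integrableOn_of_continuous {f : E → ℝ} (hf : Continuous f) : IntegrableOn f S μ :=
    (hf.continuousOn.integrableOn_compact hSb.isCompact_closure).mono_set subset_closure
  have hdilate : Continuous (Function.uncurry fun (v : E) (l : ℝ) ↦ u (l • v)) :=
    hu.continuous.comp (by fun_prop)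
  have hderiv := ae_hasDerivAt_dilation (μ := μ) hu hS hg
  have hg_meas : AEStronglyMeasurable g (μ.restrict S) :=
    ((measurable_deriv_with_param hdilate).comp
      (measurable_id.prodMk measurable_const)).aestronglyMeasurable.congr
        (hderiv.mono fun v hv ↦ hv.deriv)
  refine hasDerivAt_integral_of_dominated_loc_of_lip (bound := fun v ↦ C * ‖v‖) Filter.univ_mem
    (.of_forall fun l ↦ ?_) ?_ hg_meas (.of_forall fun v ↦ ?_) ?_ hderiv
  · exact (hdilate.comp (.prodMk continuous_id continuous_const)).aestronglyMeasurable
  · exact integrableOn_of_continuous (hdilate.comp (.prodMk continuous_id continuous_const))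
  · refine LipschitzOnWith.of_dist_le_mul fun l _ l' _ ↦ (hu.dist_le_mul _ _).trans_eq ?_
    rw [dist_eq_norm, ← sub_smul, norm_smul, ← dist_eq_norm, Real.coe_nnabs,
      abs_of_nonneg (by positivity)]
    ring
  · exact integrableOn_of_continuous (by fun_prop)

end Dilation

/-- The signed area of the parallelogram spanned by `v` and `w`. -/
def cross (v w : ℝ × ℝ) : ℝ := v.1 * w.2 - v.2 * w.1

lemma det_smulRight_fst_add_smulRight_snd (v w : ℝ × ℝ) :
    ((ContinuousLinearMap.fst ℝ ℝ ℝ).smulRight v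
      + (ContinuousLinearMap.snd ℝ ℝ ℝ).smulRight w).det = cross v w := by
  have hmatrix : (ContinuousLinearMap.fst ℝ ℝ ℝ).smulRight v
      + (ContinuousLinearMap.snd ℝ ℝ ℝ).smulRight w
      = LinearMap.toContinuousLinearMap (Matrix.toLin (Module.Basis.finTwoProd ℝ)
        (Module.Basis.finTwoProd ℝ) !![v.1, w.1; v.2, w.2]) := by
    ext <;> simp [Matrix.toLin_finTwoProd_apply]
  rw [hmatrix, LinearMap.det_toContinuousLinearMap, LinearMap.det_toLin, Matrix.det_fin_two_of,
    cross]
  ring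

/-- The fan of segments joining the points `β s` of a base curve to the points `η s` of a top
curve, parametrised by the curve parameter `z.1` and the position `z.2 ∈ [0,1]` on the segment. -/
def fan (β η : ℝ → ℝ × ℝ) (z : ℝ × ℝ) : ℝ × ℝ :=
  (1 - z.2) • β z.1 + z.2 • η z.1

/-- The Jacobian determinant of `fan β η`, where `β'` and `η'` stand for the derivatives of `β` and
`η`. -/
def fanJacobian (β β' η η' : ℝ → ℝ × ℝ) (z : ℝ × ℝ) : ℝ :=
  (1 - z.2) * cross (β' z.1) (η z.1 - β z.1) + z.2 * cross (η' z.1) (η z.1 - β z.1)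

section Fan

variable {β β' η η' : ℝ → ℝ × ℝ} {z : ℝ × ℝ}

lemma fan_mem_Icc (hle : β z.1 ≤ η z.1) (hz : z.2 ∈ Set.Icc (0 : ℝ) 1) :
    fan β η z ∈ Set.Icc (β z.1) (η z.1) :=
  segment_subset_Icc hle
    ⟨1 - z.2, z.2, sub_nonneg.2 hz.2, hz.1, sub_add_cancel 1 z.2, rfl⟩

lemma hasFDerivAt_fan (hβ : HasDerivAt β (β' z.1) z.1) (hη : HasDerivAt η (η' z.1) z.1) :
    HasFDerivAt (fan β η) ((ContinuousLinearMap.fst ℝ ℝ ℝ).smulRight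
      ((1 - z.2) • β' z.1 + z.2 • η' z.1)
      + (ContinuousLinearMap.snd ℝ ℝ ℝ).smulRight (η z.1 - β z.1)) z := by
  have hfst := hasFDerivAt_fst (𝕜 := ℝ) (p := z)
  have hsnd := hasFDerivAt_snd (𝕜 := ℝ) (p := z)
  have hfan := ((hsnd.const_sub 1).smul (hβ.hasFDerivAt.comp z hfst)).add
    (hsnd.smul (hη.hasFDerivAt.comp z hfst))
  refine hfan.congr_fderiv ?_
  ext <;> simp <;> ring

lemma setIntegral_image_fan {F : Type*} [NormedAddCommGroup F] [NormedSpace ℝ F]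
    {S : Set (ℝ × ℝ)} (hS : MeasurableSet S)
    (hβ : ∀ z ∈ S, HasDerivAt β (β' z.1) z.1) (hη : ∀ z ∈ S, HasDerivAt η (η' z.1) z.1)
    (hinj : Set.InjOn (fan β η) S) (hJ : ∀ z ∈ S, 0 ≤ fanJacobian β β' η η' z)
    (g : ℝ × ℝ → F) :
    ∫ v in fan β η '' S, g v = ∫ z in S, fanJacobian β β' η η' z • g (fan β η z) := by
  rw [integral_image_eq_integral_abs_det_fderiv_smul volume hS
    (fun z hz ↦ (hasFDerivAt_fan (hβ z hz) (hη z hz)).hasFDerivWithinAt) hinj]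
  refine setIntegral_congr_fun hS fun z hz ↦ ?_
  have hdet : cross ((1 - z.2) • β' z.1 + z.2 • η' z.1) (η z.1 - β z.1)
      = fanJacobian β β' η η' z := by
    simp only [cross, fanJacobian, Prod.fst_add, Prod.snd_add, Prod.smul_fst, Prod.smul_snd,
      smul_eq_mul]
    ring
  simp only [det_smulRight_fst_add_smulRight_snd, hdet, abs_of_nonneg (hJ z hz)]

end Fan

lemma integrableOn_Ioc_prod_Ioc {F : Type*} [NormedAddCommGroup F] {a b a' b' : ℝ}
    {f : ℝ × ℝ → F} (hf : ContinuousOn f (Set.Icc a b ×ˢ Set.Icc a' b')) :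
    IntegrableOn f (Set.Ioc a b ×ˢ Set.Ioc a' b') :=
  (hf.integrableOn_compact (isCompact_Icc.prod isCompact_Icc)).mono_set
    (Set.prod_mono Set.Ioc_subset_Icc_self Set.Ioc_subset_Icc_self)

lemma setIntegral_Ioc_prod_Ioc {F : Type*} [NormedAddCommGroup F] [NormedSpace ℝ F]
    {a b a' b' : ℝ} (hab : a ≤ b) (hab' : a' ≤ b') {f : ℝ × ℝ → F}
    (hf : IntegrableOn f (Set.Ioc a b ×ˢ Set.Ioc a' b')) :
    ∫ z in Set.Ioc a b ×ˢ Set.Ioc a' b', f z = ∫ s in a..b, ∫ r in a'..b', f (s, r) := by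
  rw [Measure.volume_eq_prod] at hf ⊢
  simp only [setIntegral_prod _ hf, intervalIntegral.integral_of_le hab,
    intervalIntegral.integral_of_le hab']

lemma integral_affine_mul_sub (j₀ j₁ e k : ℝ) :
    ∫ r in (0 : ℝ)..1, ((1 - r) * j₀ + r * j₁) * (e - (1 - r) * k)
      = (j₀ + j₁) / 2 * e - (j₀ / 3 + j₁ / 6) * k := by
  have hprimitive (r : ℝ) : HasDerivAt
      (fun r : ℝ ↦ ((r - r ^ 2 / 2) * j₀ + r ^ 2 / 2 * j₁) * e
        - ((r - r ^ 2 + r ^ 3 / 3) * j₀ + (r ^ 2 / 2 - r ^ 3 / 3) * j₁) * k)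
      (((1 - r) * j₀ + r * j₁) * (e - (1 - r) * k)) r := by
    have h₁ := hasDerivAt_id r
    have h₂ := h₁.pow 2
    have h₃ := h₁.pow 3
    refine (((((h₁.sub (h₂.div_const 2)).mul_const j₀).add
      ((h₂.div_const 2).mul_const j₁)).mul_const e).sub
      (((((h₁.sub h₂).add (h₃.div_const 3)).mul_const j₀).add
        (((h₂.div_const 2).sub (h₃.div_const 3)).mul_const j₁)).mul_const k)).congr_deriv ?_
    simp only [id_eq]
    ring
  rw [intervalIntegral.integral_eq_sub_of_hasDerivAt (fun r _ ↦ hprimitive r)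
    (Continuous.intervalIntegrable (by fun_prop) _ _)]
  ring

section FanBound

variable {β β' η η' : ℝ → ℝ × ℝ} {z : ℝ × ℝ} {a b : ℝ} {u : ℝ × ℝ → ℝ}

lemma UnitSlope.sub_le_fan (hu : UnitSlope u) (hle : β z.1 ≤ η z.1)
    (hz : z.2 ∈ Set.Icc (0 : ℝ) 1) :
    u (η z.1) - (1 - z.2) * ((η z.1 - β z.1).1 + (η z.1 - β z.1).2) ≤ u (fan β η z) := by
  have h := hu.le_add_of_le (fan_mem_Icc hle hz).2
  simp only [fan, Prod.fst_add, Prod.snd_add, Prod.smul_fst, Prod.smul_snd, smul_eq_mul,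
    Prod.fst_sub, Prod.snd_sub] at h ⊢
  linarith

lemma fanJacobian_nonneg (hJ₀ : 0 ≤ cross (β' z.1) (η z.1 - β z.1))
    (hJ₁ : 0 ≤ cross (η' z.1) (η z.1 - β z.1)) (hz : z.2 ∈ Set.Icc (0 : ℝ) 1) :
    0 ≤ fanJacobian β β' η η' z :=
  add_nonneg (mul_nonneg (sub_nonneg.2 hz.2) hJ₀) (mul_nonneg hz.1 hJ₁)

lemma continuousOn_fan {I J : Set ℝ} (hβ : ContinuousOn β I) (hη : ContinuousOn η I) :
    ContinuousOn (fan β η) (I ×ˢ J) := by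
  have hmaps : Set.MapsTo (fun z : ℝ × ℝ ↦ z.1) (I ×ˢ J) I := fun z hz ↦ hz.1
  unfold fan
  fun_prop (disch := assumption)

lemma continuousOn_fanJacobian {I J : Set ℝ} (hβ : ContinuousOn β I) (hη : ContinuousOn η I)
    (hβ' : ContinuousOn β' I) (hη' : ContinuousOn η' I) :
    ContinuousOn (fanJacobian β β' η η') (I ×ˢ J) := by
  have hmaps : Set.MapsTo (fun z : ℝ × ℝ ↦ z.1) (I ×ˢ J) I := fun z hz ↦ hz.1
  unfold fanJacobian cross
  fun_prop (disch := assumption)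

-- Each segment of the fan carries an affine mass density, and along it the utility falls short of
-- its value on the top curve by at most the `ℓ¹` distance to that curve.
lemma UnitSlope.integral_le_setIntegral_fan (hu : UnitSlope u) (hab : a ≤ b)
    (hβ : ∀ s ∈ Set.Icc a b, HasDerivAt β (β' s) s) (hη : ∀ s ∈ Set.Icc a b, HasDerivAt η (η' s) s)
    (hβ' : ContinuousOn β' (Set.Icc a b)) (hη' : ContinuousOn η' (Set.Icc a b))
    (hle : ∀ s ∈ Set.Icc a b, β s ≤ η s)
    (hJ₀ : ∀ s ∈ Set.Icc a b, 0 ≤ cross (β' s) (η s - β s))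
    (hJ₁ : ∀ s ∈ Set.Icc a b, 0 ≤ cross (η' s) (η s - β s))
    (hinj : Set.InjOn (fan β η) (Set.Ioc a b ×ˢ Set.Ioc 0 1)) :
    ∫ s in a..b, ((cross (β' s) (η s - β s) + cross (η' s) (η s - β s)) / 2 * u (η s)
        - (cross (β' s) (η s - β s) / 3 + cross (η' s) (η s - β s) / 6)
          * ((η s - β s).1 + (η s - β s).2))
      ≤ ∫ v in fan β η '' (Set.Ioc a b ×ˢ Set.Ioc 0 1), u v := by
  set S : Set (ℝ × ℝ) := Set.Ioc a b ×ˢ Set.Ioc 0 1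
  set lower : ℝ × ℝ → ℝ := fun z ↦
    u (η z.1) - (1 - z.2) * ((η z.1 - β z.1).1 + (η z.1 - β z.1).2)
  have hS : MeasurableSet S := measurableSet_Ioc.prod measurableSet_Ioc
  have hfst : ∀ z ∈ S, z.1 ∈ Set.Icc a b := fun z hz ↦ Set.Ioc_subset_Icc_self hz.1
  have hsnd : ∀ z ∈ S, z.2 ∈ Set.Icc (0 : ℝ) 1 := fun z hz ↦ Set.Ioc_subset_Icc_self hz.2
  have hJ : ∀ z ∈ S, 0 ≤ fanJacobian β β' η η' z := fun z hz ↦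
    fanJacobian_nonneg (hJ₀ _ (hfst z hz)) (hJ₁ _ (hfst z hz)) (hsnd z hz)
  have hβc : ContinuousOn β (Set.Icc a b) := HasDerivAt.continuousOn hβ
  have hηc : ContinuousOn η (Set.Icc a b) := HasDerivAt.continuousOn hη
  have hJc := continuousOn_fanJacobian (J := Set.Icc 0 1) hβc hηc hβ' hη'
  have hlower_cont : ContinuousOn lower (Set.Icc a b ×ˢ Set.Icc 0 1) := by
    have hmaps : Set.MapsTo (fun z : ℝ × ℝ ↦ z.1) (Set.Icc a b ×ˢ Set.Icc 0 1) (Set.Icc a b) :=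
      fun z hz ↦ hz.1
    have := hu.continuous
    fun_prop (disch := assumption)
  have hlower := integrableOn_Ioc_prod_Ioc (hJc.mul hlower_cont)
  have hupper := integrableOn_Ioc_prod_Ioc
    (hJc.mul (hu.continuous.comp_continuousOn (continuousOn_fan hβc hηc)))
  simp only [← integral_affine_mul_sub]
  calc _ = ∫ z in S, fanJacobian β β' η η' z * lower z :=
        (setIntegral_Ioc_prod_Ioc hab zero_le_one hlower).symm
    _ ≤ ∫ z in S, fanJacobian β β' η η' z * u (fan β η z) :=
        setIntegral_mono_on hlower hupper hS fun z hz ↦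
          mul_le_mul_of_nonneg_left (hu.sub_le_fan (hle _ (hfst z hz)) (hsnd z hz)) (hJ z hz)
    _ = _ := (setIntegral_image_fan hS (fun z hz ↦ hβ _ (hfst z hz))
        (fun z hz ↦ hη _ (hfst z hz)) hinj hJ u).symm

end FanBound

/-- The hypotenuse of `Tri c`, from `(0, 1)` to `(c, 0)`. -/
def edge (c s : ℝ) : ℝ × ℝ := (c * s, 1 - s)

section Triangle

variable {c : ℝ}

lemma hasDerivAt_edge (c s : ℝ) : HasDerivAt (edge c) (c, -1) s := by
  simpa [edge] using! ((hasDerivAt_id s).const_mul c).prodMk ((hasDerivAt_id s).const_sub 1)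

@[fun_prop]
lemma continuous_edge (c : ℝ) : Continuous (edge c) := by
  unfold edge
  fun_prop

lemma edge_mem_tri (hc : 0 < c) {s : ℝ} (hs : s ∈ Set.Icc (0 : ℝ) 1) : edge c s ∈ Tri c :=
  ⟨mul_nonneg hc.le hs.1, sub_nonneg.2 hs.2, by simp [edge, hc.ne']⟩

lemma mem_tri_of_le (hc : 0 < c) {v w : ℝ × ℝ} (hv : 0 ≤ v) (hvw : v ≤ w) (hw : w ∈ Tri c) :
    v ∈ Tri c := by
  refine ⟨hv.1, hv.2, le_trans ?_ hw.2.2⟩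
  gcongr
  exacts [hvw.1, hvw.2]

lemma measurableSet_tri (c : ℝ) : MeasurableSet (Tri c) :=
  (measurableSet_le measurable_const measurable_fst).inter
    ((measurableSet_le measurable_const measurable_snd).inter
      (measurableSet_le ((measurable_fst.div_const c).add measurable_snd) measurable_const))

lemma tri_subset_Icc (hc : 0 < c) : Tri c ⊆ Set.Icc 0 (c, 1) := by
  rintro ⟨a, b⟩ ⟨ha, hb, hab⟩
  have hac : 0 ≤ a / c := div_nonneg ha hc.le
  dsimp only at ha hb hab
  exact ⟨⟨ha, hb⟩, (div_le_one hc).1 (by linarith), by dsimp only; linarith⟩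

lemma integrableOn_tri (hc : 0 < c) {g : ℝ × ℝ → ℝ} (hg : Continuous g) :
    IntegrableOn g (Tri c) :=
  (hg.continuousOn.integrableOn_compact isCompact_Icc).mono_set (tri_subset_Icc hc)

lemma fan_zero_edge (c : ℝ) (z : ℝ × ℝ) :
    fan (fun _ ↦ 0) (edge c) z = z.2 • edge c z.1 := by
  simp [fan]

lemma fan_zero_edge_level (hc : c ≠ 0) (z : ℝ × ℝ) :
    (fan (fun _ ↦ 0) (edge c) z).1 / c + (fan (fun _ ↦ 0) (edge c) z).2 = z.2 := by
  simp only [fan_zero_edge, edge, Prod.smul_mk, smul_eq_mul]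
  field_simp
  ring

lemma injOn_fan_zero_edge (hc : c ≠ 0) :
    Set.InjOn (fan (fun _ ↦ 0) (edge c)) (Set.Ioc 0 1 ×ˢ Set.Ioc 0 1) := by
  rintro ⟨s, r⟩ ⟨-, hr, -⟩ ⟨s', r'⟩ - heq
  obtain rfl : r = r' := by
    simpa only [fan_zero_edge_level hc] using congrArg (fun v : ℝ × ℝ ↦ v.1 / c + v.2) heq
  simp only [fan_zero_edge, edge] at heq
  simpa [hc] using smul_right_injective _ hr.ne' heq

lemma image_fan_zero_edge (hc : 0 < c) :
    fan (fun _ ↦ 0) (edge c) '' (Set.Ioc 0 1 ×ˢ Set.Ioc 0 1) = Tri c \ ({0} ×ˢ Set.univ) := by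
  ext ⟨v₁, v₂⟩
  constructor
  · rintro ⟨⟨s, r⟩, ⟨hs, hr⟩, heq⟩
    refine heq ▸ ⟨⟨?_, ?_, (fan_zero_edge_level hc.ne' _).trans_le hr.2⟩, ?_⟩ <;>
      simp only [fan_zero_edge, edge, Prod.smul_mk, smul_eq_mul]
    · exact mul_nonneg hr.1.le (mul_nonneg hc.le hs.1.le)
    · exact mul_nonneg hr.1.le (sub_nonneg.2 hs.2)
    · simpa using ⟨hr.1.ne', hc.ne', hs.1.ne'⟩
  · rintro ⟨⟨h₁, h₂, hlevel⟩, hne⟩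
    dsimp only at h₁ h₂ hlevel
    have hv₁ : 0 < v₁ := h₁.lt_of_ne' fun h ↦ hne (by simp [h])
    have hr : 0 < v₁ / c + v₂ := by positivity
    refine ⟨(v₁ / c / (v₁ / c + v₂), v₁ / c + v₂),
      ⟨⟨by positivity, (div_le_one hr).2 (by linarith)⟩, hr, hlevel⟩, ?_⟩
    simp only [fan_zero_edge, edge, Prod.smul_mk, smul_eq_mul, mul_sub, mul_one,
      mul_left_comm _ c, mul_div_cancel₀ _ hr.ne', mul_div_cancel₀ _ hc.ne', add_sub_cancel_left]

lemma setIntegral_tri (hc : 0 < c) {g : ℝ × ℝ → ℝ} (hg : Continuous g) :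
    ∫ v in Tri c, g v = c * ∫ r in (0 : ℝ)..1, r * ∫ s in (0 : ℝ)..1, g (r • edge c s) := by
  have hJ (z : ℝ × ℝ) :
      fanJacobian (fun _ ↦ 0) (fun _ ↦ 0) (edge c) (fun _ ↦ (c, -1)) z = c * z.2 := by
    simp only [fanJacobian, cross, edge, sub_zero, Prod.fst_zero, Prod.snd_zero]
    ring
  have hint : IntegrableOn (fun z : ℝ × ℝ ↦ c * (z.2 * g (z.2 • edge c z.1)))
      (Set.Ioc 0 1 ×ˢ Set.Ioc 0 1) :=
    integrableOn_Ioc_prod_Ioc (Continuous.continuousOn (by fun_prop))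
  have hnull : volume ({0} ×ˢ Set.univ : Set (ℝ × ℝ)) = 0 := by
    simp [Measure.volume_eq_prod, Measure.prod_prod]
  calc ∫ v in Tri c, g v
      = ∫ v in fan (fun _ ↦ 0) (edge c) '' (Set.Ioc 0 1 ×ˢ Set.Ioc 0 1), g v := by
        rw [image_fan_zero_edge hc]
        exact (setIntegral_congr_set (sdiff_null_ae_eq_self hnull)).symm
    _ = ∫ z in Set.Ioc (0 : ℝ) 1 ×ˢ Set.Ioc (0 : ℝ) 1, c * (z.2 * g (z.2 • edge c z.1)) := by
        rw [setIntegral_image_fan (measurableSet_Ioc.prod measurableSet_Ioc)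
          (fun z _ ↦ hasDerivAt_const z.1 0) (fun z _ ↦ hasDerivAt_edge c z.1)
          (injOn_fan_zero_edge hc.ne') fun z hz ↦ hJ z ▸ mul_nonneg hc.le hz.2.1.le]
        simp only [hJ, fan_zero_edge, smul_eq_mul, mul_assoc]
    _ = ∫ s in (0 : ℝ)..1, ∫ r in (0 : ℝ)..1, c * (r * g (r • edge c s)) :=
        setIntegral_Ioc_prod_Ioc zero_le_one zero_le_one hint
    _ = ∫ r in (0 : ℝ)..1, ∫ s in (0 : ℝ)..1, c * (r * g (r • edge c s)) := by
        refine intervalIntegral_intervalIntegral_swap ?_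
        rwa [Set.uIoc_of_le zero_le_one]
    _ = _ := by simp only [intervalIntegral.integral_const_mul]

lemma setIntegral_tri_dilation (hc : 0 < c) {g : ℝ × ℝ → ℝ} (hg : Continuous g) {l : ℝ}
    (hl : l ≠ 0) :
    ∫ v in Tri c, g (l • v)
      = c * (l⁻¹ ^ 2 * ∫ r in (0 : ℝ)..l, r * ∫ s in (0 : ℝ)..1, g (r • edge c s)) := by
  have hsubst := intervalIntegral.integral_comp_mul_left (a := 0) (b := 1)
    (fun r ↦ r * ∫ s in (0 : ℝ)..1, g (r • edge c s)) hl
  rw [mul_zero, mul_one, smul_eq_mul] at hsubst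
  rw [setIntegral_tri hc (by fun_prop : Continuous fun v ↦ g (l • v)), pow_two, mul_assoc l⁻¹,
    ← hsubst]
  simp only [smul_smul, mul_assoc, intervalIntegral.integral_const_mul, inv_mul_cancel_left₀ hl]

lemma hasDerivAt_setIntegral_tri_dilation (hc : 0 < c) {g : ℝ × ℝ → ℝ} (hg : Continuous g) :
    HasDerivAt (fun l : ℝ ↦ ∫ v in Tri c, g (l • v))
      (c * (∫ s in (0 : ℝ)..1, g (edge c s)) - 2 * ∫ v in Tri c, g v) 1 := by
  set K : ℝ → ℝ := fun r ↦ r * ∫ s in (0 : ℝ)..1, g (r • edge c s)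
  have hK : Continuous K := by fun_prop
  have hinv : HasDerivAt (fun l : ℝ ↦ l⁻¹ ^ 2) (-2) 1 :=
    ((hasDerivAt_inv one_ne_zero).pow 2).congr_deriv (by norm_num)
  refine (((hinv.mul (hK.integral_hasStrictDerivAt 0 1).hasDerivAt).const_mul
    c).congr_of_eventuallyEq ?_).congr_deriv ?_
  · filter_upwards [isOpen_ne.mem_nhds one_ne_zero] with l hl
    exact setIntegral_tri_dilation hc hg hl
  · rw [setIntegral_tri hc hg]
    simp only [K, one_smul, inv_one, one_pow]
    ring

theorem IsICMechanism.setIntegral_tri_payment {x : ℝ × ℝ → ℝ × ℝ} {p : ℝ × ℝ → ℝ}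
    (hM : IsICMechanism (Tri c) x p) (hc : 0 < c) :
    ∫ v in Tri c, p v = c * (∫ s in (0 : ℝ)..1, indirectUtility (Tri c) x p (edge c s))
      - 3 * ∫ v in Tri c, indirectUtility (Tri c) x p v := by
  set u := indirectUtility (Tri c) x p
  have hu : UnitSlope u :=
    hM.unitSlope_indirectUtility ⟨_, edge_mem_tri hc ⟨le_rfl, zero_le_one⟩⟩
  have hbdd : Bornology.IsBounded (Tri c) :=
    (Metric.isBounded_Icc _ _).subset (tri_subset_Icc hc)
  obtain ⟨hpu, hderiv⟩ := hasDerivAt_setIntegral_dilation (μ := volume) (g := fun v ↦ p v + u v)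
    hu.lipschitzWith (measurableSet_tri c) hbdd fun v hv ↦ hM.indirectUtility_dilation_ge hv
  have hsum := hderiv.unique (hasDerivAt_setIntegral_tri_dilation hc hu.continuous)
  have hdiff := integral_sub hpu (integrableOn_tri hc hu.continuous)
  simp only [add_sub_cancel_right] at hdiff
  linarith

end Triangle

/-- The line `v₁ / c + v₂ = 2 / 3`, above which the optimal mechanism sells the lottery with
allocation `(1 / c, 1)`, parametrised so that each point lies vertically below `edge c s`. -/
def leftBase (c s : ℝ) : ℝ × ℝ := (c * s, 2 / 3 - s)

/-- The factor by which the segments of the right fan are longer, in `ℓ¹` norm, than those of the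
left fan. -/
def stretch (c t s : ℝ) : ℝ := 1 + 3 * (c - 1) * (s - t)

/-- The line of slope `-1` through `leftBase c t`, above which the optimal mechanism sells the
bundle. The parametrisation by `stretch` is the one for which each segment up to `edge c s`
receives the mass `c / 3`. -/
def rightBase (c t s : ℝ) : ℝ × ℝ :=
  (c * (t + (s - t) / stretch c t s), 2 / 3 - t - c * ((s - t) / stretch c t s))

section LeftFan

variable {c t : ℝ} {u : ℝ × ℝ → ℝ}

lemma hasDerivAt_leftBase (c s : ℝ) : HasDerivAt (leftBase c) (c, -1) s := by
  simpa [leftBase] using!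
    ((hasDerivAt_id s).const_mul c).prodMk ((hasDerivAt_id s).const_sub (2 / 3))

lemma leftBase_le_edge (c s : ℝ) : leftBase c s ≤ edge c s :=
  ⟨le_rfl, sub_le_sub_right (by norm_num) s⟩

lemma edge_sub_leftBase (c s : ℝ) : edge c s - leftBase c s = (0, 1 / 3) := by
  ext <;> simp only [edge, leftBase, Prod.fst_sub, Prod.snd_sub] <;> ring

lemma fan_leftBase_edge (c : ℝ) (z : ℝ × ℝ) :
    fan (leftBase c) (edge c) z = (c * z.1, 2 / 3 - z.1 + z.2 / 3) := by
  ext <;> simp [fan, leftBase, edge] <;> ring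

lemma injective_fan_leftBase_edge (hc : c ≠ 0) :
    Function.Injective (fan (leftBase c) (edge c)) := by
  rintro ⟨s, r⟩ ⟨s', r'⟩ heq
  simp only [fan_leftBase_edge, Prod.mk.injEq, mul_right_inj' hc] at heq ⊢
  exact ⟨heq.1, by linarith [heq.1, heq.2]⟩

lemma UnitSlope.le_setIntegral_leftFan (hu : UnitSlope u) (hc : 0 < c) {a b : ℝ} (hab : a ≤ b) :
    c / 3 * (∫ s in a..b, u (edge c s)) - c * (b - a) / 18
      ≤ ∫ v in fan (leftBase c) (edge c) '' (Set.Ioc a b ×ˢ Set.Ioc 0 1), u v := by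
  have hJ (s : ℝ) : cross (c, -1) (edge c s - leftBase c s) = c / 3 := by
    simp only [edge_sub_leftBase, cross]
    ring
  have hfan := hu.integral_le_setIntegral_fan hab (fun s _ ↦ hasDerivAt_leftBase c s)
    (fun s _ ↦ hasDerivAt_edge c s) continuousOn_const continuousOn_const
    (fun s _ ↦ leftBase_le_edge c s) (fun s _ ↦ hJ s ▸ by positivity)
    (fun s _ ↦ hJ s ▸ by positivity) (injective_fan_leftBase_edge hc.ne').injOn
  have hu_cont := hu.continuous
  refine le_trans (le_of_eq ?_) hfan
  simp only [hJ]
  simp only [edge_sub_leftBase]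
  rw [intervalIntegral.integral_sub (Continuous.intervalIntegrable (by fun_prop) _ _)
    (Continuous.intervalIntegrable (by fun_prop) _ _), intervalIntegral.integral_const_mul,
    intervalIntegral.integral_const, smul_eq_mul]
  ring

lemma image_leftFan_subset (hc : 0 < c) (ht : t ≤ 2 / 3) :
    fan (leftBase c) (edge c) '' (Set.Ioc 0 t ×ˢ Set.Ioc 0 1) ⊆ Tri c ∩ {v | v.1 ≤ c * t} := by
  rintro _ ⟨z, ⟨⟨hs₀, hst⟩, hr⟩, rfl⟩
  obtain ⟨hge, hle⟩ := fan_mem_Icc (leftBase_le_edge c z.1) (Set.Ioc_subset_Icc_self hr)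
  have hbase : 0 ≤ leftBase c z.1 := ⟨mul_nonneg hc.le hs₀.le, sub_nonneg.2 (hst.trans ht)⟩
  refine ⟨mem_tri_of_le hc (hbase.trans hge) hle (edge_mem_tri hc ⟨hs₀.le, by linarith⟩), ?_⟩
  exact hle.1.trans (mul_le_mul_of_nonneg_left hst hc.le)

end LeftFan

section RightFan

variable {c t s : ℝ} {u : ℝ × ℝ → ℝ}

lemma one_le_stretch (hc : 1 ≤ c) (hs : t ≤ s) : 1 ≤ stretch c t s :=
  le_add_of_nonneg_right (mul_nonneg (by linarith) (sub_nonneg.2 hs))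

lemma stretch_pos (hc : 1 ≤ c) (hs : t ≤ s) : 0 < stretch c t s :=
  zero_lt_one.trans_le (one_le_stretch hc hs)

lemma hasDerivAt_stretch (c t s : ℝ) : HasDerivAt (stretch c t) (3 * (c - 1)) s :=
  ((((hasDerivAt_id s).sub_const t).const_mul (3 * (c - 1))).const_add 1).congr_deriv
    (mul_one _)

lemma hasDerivAt_rightBase (hq : stretch c t s ≠ 0) :
    HasDerivAt (rightBase c t) (c / stretch c t s ^ 2, -(c / stretch c t s ^ 2)) s := by
  have hdiv := ((hasDerivAt_id s).sub_const t).div (hasDerivAt_stretch c t s) hq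
  refine (((hdiv.const_add t).const_mul c).prodMk
    ((hdiv.const_mul c).const_sub (2 / 3 - t))).congr_deriv ?_
  have hnum : 1 * stretch c t s - (s - t) * (3 * (c - 1)) = 1 := by
    simp only [stretch]
    ring
  simp only [id_eq, hnum, mul_one_div]

lemma edge_sub_rightBase_fst_add_snd (c t s : ℝ) :
    (edge c s - rightBase c t s).1 + (edge c s - rightBase c t s).2 = stretch c t s / 3 := by
  simp only [edge, rightBase, Prod.fst_sub, Prod.snd_sub]
  rw [stretch]
  ring

lemma cross_deriv_rightBase (hq : stretch c t s ≠ 0) :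
    cross (c / stretch c t s ^ 2, -(c / stretch c t s ^ 2)) (edge c s - rightBase c t s)
      = c / (3 * stretch c t s) := by
  calc _ = c / stretch c t s ^ 2
        * ((edge c s - rightBase c t s).1 + (edge c s - rightBase c t s).2) := by
        simp only [cross]
        ring
    _ = _ := by
        rw [edge_sub_rightBase_fst_add_snd]
        field_simp

lemma cross_deriv_edge_rightBase (hq : stretch c t s ≠ 0) :
    cross (c, -1) (edge c s - rightBase c t s) = c / 3 * (2 - 1 / stretch c t s) := by
  have hd : 3 * (c - 1) * ((s - t) / stretch c t s) = 1 - 1 / stretch c t s := by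
    rw [← mul_div_assoc, eq_sub_iff_add_eq, ← add_div, div_eq_one_iff_eq hq, stretch]
    ring
  simp only [cross, edge, rightBase, Prod.fst_sub, Prod.snd_sub]
  linear_combination (c / 3) * hd

lemma injOn_mul_prodMk_one_sub_mul :
    Set.InjOn (fun z : ℝ × ℝ ↦ (z.2 * z.1, (1 - z.2) * (2 - 1 / z.1)))
      (Set.Ici 1 ×ˢ Set.Ioc 0 1) := by
  have lt_of_lt {q r q' r' : ℝ} (hq : 1 ≤ q) (hqq' : q < q') (hr : r ≤ 1) (hr' : 0 < r')
      (hmul : r * q = r' * q') : (1 - r) * (2 - 1 / q) < (1 - r') * (2 - 1 / q') := by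
    have hrr' : r' < r := by
      by_contra! hle
      exact (mul_lt_mul' hle hqq' (by linarith) hr').ne hmul
    have hinv : 1 / q' < 1 / q := one_div_lt_one_div_of_lt (by linarith) hqq'
    have hinv_le : 1 / q ≤ 1 := (div_le_one (by linarith)).2 hq
    exact mul_lt_mul'' (by linarith) (by linarith) (by linarith) (by linarith)
  rintro ⟨q, r⟩ ⟨hq, hr⟩ ⟨q', r'⟩ ⟨hq', hr'⟩ heq
  simp only [Prod.mk.injEq, Set.mem_Ici] at heq hq hq' ⊢
  obtain rfl : q = q' := by
    rcases lt_trichotomy q q' with hlt | heq' | hlt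
    · exact absurd heq.2 (lt_of_lt hq hlt hr.2 hr'.1 heq.1).ne
    · exact heq'
    · exact absurd heq.2 (lt_of_lt hq' hlt hr'.2 hr.1 heq.1.symm).ne'
  exact ⟨rfl, mul_right_cancel₀ (by linarith) heq.1⟩

lemma fan_rightBase_edge_sum (c t : ℝ) (z : ℝ × ℝ) :
    3 * ((fan (rightBase c t) (edge c) z).1 + (fan (rightBase c t) (edge c) z).2
      - (c * t + (2 / 3 - t))) = z.2 * stretch c t z.1 := by
  have hsum := edge_sub_rightBase_fst_add_snd c t z.1
  simp only [fan, edge, rightBase, Prod.fst_add, Prod.snd_add, Prod.smul_fst, Prod.smul_snd,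
    Prod.fst_sub, Prod.snd_sub, smul_eq_mul] at hsum ⊢
  linear_combination (3 * z.2) * hsum

lemma fan_rightBase_edge_level (hc : c ≠ 0) {z : ℝ × ℝ} (hq : stretch c t z.1 ≠ 0) :
    3 * (1 - ((fan (rightBase c t) (edge c) z).1 / c + (fan (rightBase c t) (edge c) z).2))
      = (1 - z.2) * (2 - 1 / stretch c t z.1) := by
  have hcross := cross_deriv_edge_rightBase hq
  have hfst (y y' : ℝ) : ((1 - z.2) * (c * y) + z.2 * (c * y')) / c
      = (1 - z.2) * y + z.2 * y' := by
    field_simp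
  refine mul_left_cancel₀ hc ?_
  simp only [fan, cross, edge, rightBase, Prod.fst_add, Prod.snd_add, Prod.smul_fst,
    Prod.smul_snd, Prod.fst_sub, Prod.snd_sub, smul_eq_mul, hfst] at hcross ⊢
  linear_combination (3 * (1 - z.2)) * hcross

-- The pair `(v₁ + v₂, v₁ / c + v₂)` separates the points of the right fan.
lemma injOn_fan_rightBase_edge (hc : 1 < c) :
    Set.InjOn (fan (rightBase c t) (edge c)) (Set.Ici t ×ˢ Set.Ioc 0 1) := by
  have hmem {z : ℝ × ℝ} (hz : z ∈ Set.Ici t ×ˢ Set.Ioc 0 1) :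
      (stretch c t z.1, z.2) ∈ Set.Ici (1 : ℝ) ×ˢ Set.Ioc (0 : ℝ) 1 :=
    ⟨one_le_stretch hc.le hz.1, hz.2⟩
  rintro z hz z' hz' heq
  have hsum := fan_rightBase_edge_sum c t z
  have hlevel := fan_rightBase_edge_level (by linarith) (stretch_pos hc.le hz.1).ne'
  rw [heq, fan_rightBase_edge_sum] at hsum
  rw [heq, fan_rightBase_edge_level (by linarith) (stretch_pos hc.le hz'.1).ne'] at hlevel
  obtain ⟨hstretch, hr⟩ := Prod.mk.inj <|
    injOn_mul_prodMk_one_sub_mul (hmem hz) (hmem hz') (Prod.ext hsum.symm hlevel.symm)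
  have hs : z.1 - t = z'.1 - t :=
    mul_left_cancel₀ (mul_pos three_pos (sub_pos.2 hc)).ne' (add_left_cancel hstretch)
  exact Prod.ext (sub_left_injective hs) hr

lemma le_third_of_kink (hc : 1 < c) (ht : t ≤ 2 / 3)
    (hkink : (c - 1) * (2 / 3 - t) ^ 2 = c / 9) : t ≤ 1 / 3 := by
  by_contra! hlt
  have hsq : (2 / 3 - t) ^ 2 ≤ (1 / 3) ^ 2 := pow_le_pow_left₀ (by linarith) (by linarith) 2
  linarith [mul_le_mul_of_nonneg_left hsq (sub_nonneg.2 hc.le)]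

lemma rightBase_le_edge (hc : 1 < c) (ht : t ≤ 2 / 3) (hkink : (c - 1) * (2 / 3 - t) ^ 2 = c / 9)
    (hs : s ∈ Set.Icc t 1) : rightBase c t s ≤ edge c s := by
  have hq := stretch_pos hc.le hs.1
  have hd : 0 ≤ s - t := sub_nonneg.2 hs.1
  constructor
  · have hdiv : (s - t) / stretch c t s ≤ s - t := div_le_self hd (one_le_stretch hc.le hs.1)
    exact mul_le_mul_of_nonneg_left (by linarith) (by linarith)
  · suffices hfrac : s - t - 1 / 3 ≤ c * (s - t) / stretch c t s by
      simp only [rightBase, edge, ← mul_div_assoc]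
      linarith
    rw [le_div_iff₀ hq, stretch]
    have hquad : (c - 1) * ((s - t) * (s - t - 2 / 3)) ≤ 1 / 9 := by
      calc _ ≤ (c - 1) * ((1 - t) * (1 / 3 - t)) := by
            refine mul_le_mul_of_nonneg_left ?_ (by linarith)
            have hfactor : 0 ≤ (1 - s) * (1 / 3 - t + (s - t)) :=
              mul_nonneg (sub_nonneg.2 hs.2) (by linarith [le_third_of_kink hc ht hkink])
            linarith
        _ = 1 / 9 := by linear_combination hkink
    linarith

lemma rightBase_nonneg (hc : 1 < c) (ht₀ : 0 ≤ t) (ht : t < 2 / 3)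
    (hkink : (c - 1) * (2 / 3 - t) ^ 2 = c / 9) (hs : s ∈ Set.Icc t 1) : 0 ≤ rightBase c t s := by
  have hq := stretch_pos hc.le hs.1
  have hd : 0 ≤ s - t := sub_nonneg.2 hs.1
  constructor
  · exact mul_nonneg (by linarith) (add_nonneg ht₀ (div_nonneg hd hq.le))
  · suffices hfrac : c * (s - t) / stretch c t s ≤ 2 / 3 - t by
      simpa only [rightBase, ← mul_div_assoc, Prod.snd_zero, sub_nonneg] using hfrac
    rw [div_le_iff₀ hq, stretch]
    have hend : (1 - t) * (c - 3 * (c - 1) * (2 / 3 - t)) = 2 / 3 - t := by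
      linear_combination (-3) * hkink
    have hslope : 0 < c - 3 * (c - 1) * (2 / 3 - t) :=
      pos_of_mul_pos_right (hend ▸ sub_pos.2 ht) (by linarith)
    linarith [mul_le_mul_of_nonneg_right (sub_le_sub_right hs.2 t) hslope.le]

lemma integral_stretch_cost (c t : ℝ) :
    ∫ s in t..1, (1 + 2 * stretch c t s) = 3 * ((1 - t) + (c - 1) * (1 - t) ^ 2) := by
  have hprimitive (s : ℝ) : HasDerivAt
      (fun s ↦ 3 * ((s - t) + (c - 1) * (s - t) ^ 2)) (1 + 2 * stretch c t s) s := by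
    have h₁ := (hasDerivAt_id s).sub_const t
    refine ((h₁.add ((h₁.pow 2).const_mul (c - 1))).const_mul 3).congr_deriv ?_
    simp only [stretch, id_eq]
    ring
  rw [intervalIntegral.integral_eq_sub_of_hasDerivAt (fun s _ ↦ hprimitive s)
    (Continuous.intervalIntegrable (by unfold stretch; fun_prop) _ _)]
  ring

lemma UnitSlope.le_setIntegral_rightFan (hu : UnitSlope u) (hc : 1 < c) (ht : t ≤ 2 / 3)
    (hkink : (c - 1) * (2 / 3 - t) ^ 2 = c / 9) :
    c / 3 * (∫ s in t..1, u (edge c s)) - c * ((1 - t) + (c - 1) * (1 - t) ^ 2) / 18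
      ≤ ∫ v in fan (rightBase c t) (edge c) '' (Set.Ioc t 1 ×ˢ Set.Ioc 0 1), u v := by
  have hq {s : ℝ} (hs : s ∈ Set.Icc t 1) : 0 < stretch c t s := stretch_pos hc.le hs.1
  have hqc : Continuous (stretch c t) := by unfold stretch; fun_prop
  have hu_cont := hu.continuous
  have hβ' : ContinuousOn (fun s ↦ c / stretch c t s ^ 2) (Set.Icc t 1) :=
    continuousOn_const.div (by fun_prop) fun s hs ↦ (pow_pos (hq hs) 2).ne'
  have hfan := hu.integral_le_setIntegral_fan (by linarith)
    (fun s hs ↦ hasDerivAt_rightBase (hq hs).ne') (fun s _ ↦ hasDerivAt_edge c s)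
    (hβ'.prodMk hβ'.neg) continuousOn_const (fun s hs ↦ rightBase_le_edge hc ht hkink hs)
    (fun s hs ↦ by
      have := hq hs
      rw [cross_deriv_rightBase (hq hs).ne']
      positivity)
    (fun s hs ↦ by
      have hinv : 1 / stretch c t s ≤ 1 := (div_le_one (hq hs)).2 (one_le_stretch hc.le hs.1)
      rw [cross_deriv_edge_rightBase (hq hs).ne']
      exact mul_nonneg (by linarith) (by linarith))
    ((injOn_fan_rightBase_edge hc).mono (Set.prod_mono (fun s hs ↦ hs.1.le) le_rfl))
  refine le_trans (le_of_eq ?_) hfan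
  calc _ = ∫ s in t..1, (c / 3 * u (edge c s) - c / 54 * (1 + 2 * stretch c t s)) := by
        rw [intervalIntegral.integral_sub (Continuous.intervalIntegrable (by fun_prop) _ _)
          (Continuous.intervalIntegrable (by fun_prop) _ _), intervalIntegral.integral_const_mul,
          intervalIntegral.integral_const_mul, integral_stretch_cost]
        ring
    _ = _ := by
        refine intervalIntegral.integral_congr fun s hs ↦ ?_
        rw [Set.uIcc_of_le (by linarith)] at hs
        have := (hq hs).ne'
        simp only [cross_deriv_rightBase this, cross_deriv_edge_rightBase this,
          edge_sub_rightBase_fst_add_snd]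
        field_simp
        ring

lemma image_rightFan_subset (hc : 1 < c) (ht₀ : 0 ≤ t) (ht : t < 2 / 3)
    (hkink : (c - 1) * (2 / 3 - t) ^ 2 = c / 9) :
    fan (rightBase c t) (edge c) '' (Set.Ioc t 1 ×ˢ Set.Ioc 0 1) ⊆ Tri c \ {v | v.1 ≤ c * t} := by
  rintro _ ⟨z, ⟨hs, hr⟩, rfl⟩
  have hc₀ : 0 < c := by linarith
  have hs' := Set.Ioc_subset_Icc_self hs
  obtain ⟨hge, hle⟩ := fan_mem_Icc (rightBase_le_edge hc ht.le hkink hs')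
    (Set.Ioc_subset_Icc_self hr)
  have hedge := edge_mem_tri hc₀ ⟨ht₀.trans hs'.1, hs'.2⟩
  refine ⟨mem_tri_of_le hc₀ ((rightBase_nonneg hc ht₀ ht hkink hs').trans hge) hle hedge, ?_⟩
  refine not_le.2 (lt_of_lt_of_le ?_ hge.1)
  exact mul_lt_mul_of_pos_left
    (lt_add_of_pos_right t (div_pos (sub_pos.2 hs.1) (stretch_pos hc.le hs'.1))) hc₀

end RightFan

/-- The parameter `s` at which the base lines `leftBase c` and `rightBase c` meet. It is the root
below `2 / 3` of `(c - 1) * (2 / 3 - t) ^ 2 = c / 9`, the equation saying that the right fan ends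
at `(c, 0)` with its last segment on the axis `v₂ = 0`. -/
def kink (c : ℝ) : ℝ := 2 / 3 - √(c * (c - 1)) / (3 * (c - 1))

section Kink

variable {c : ℝ}

lemma mul_sq_two_thirds_sub_kink (hc : 1 < c) : (c - 1) * (2 / 3 - kink c) ^ 2 = c / 9 := by
  have hc₁ : c - 1 ≠ 0 := (sub_pos.2 hc).ne'
  rw [kink, sub_sub_cancel, div_pow, sq_sqrt (mul_nonneg (by linarith) (by linarith))]
  field_simp
  norm_num

lemma kink_lt_two_thirds (hc : 1 < c) : kink c < 2 / 3 :=
  sub_lt_self _ (div_pos (sqrt_pos.2 (mul_pos (by linarith) (by linarith))) (by linarith))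

lemma kink_nonneg (hc : 4 / 3 ≤ c) : 0 ≤ kink c := by
  have hc₁ : 0 < 3 * (c - 1) := by linarith
  rw [kink, sub_nonneg, div_le_iff₀ hc₁, sqrt_le_left (by linarith)]
  nlinarith

lemma mul_one_sub_kink_sq (hc : 1 < c) :
    (c - 1) * (1 - kink c) ^ 2 = (2 * c - 1 + 2 * √(c * (c - 1))) / 9 := by
  have hlin : (c - 1) * (2 / 3 - kink c) = √(c * (c - 1)) / 3 := by
    have hc₁ : c - 1 ≠ 0 := (sub_pos.2 hc).ne'
    rw [kink, sub_sub_cancel]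
    field_simp
  linear_combination mul_sq_two_thirds_sub_kink hc + 2 / 3 * hlin

end Kink

theorem UnitSlope.integral_edge_sub_setIntegral_tri_le {c t : ℝ} {u : ℝ × ℝ → ℝ}
    (hu : UnitSlope u) (hu₀ : ∀ v ∈ Tri c, 0 ≤ u v) (hc : 1 < c) (ht₀ : 0 ≤ t) (ht : t < 2 / 3)
    (hkink : (c - 1) * (2 / 3 - t) ^ 2 = c / 9) :
    c * (∫ s in (0 : ℝ)..1, u (edge c s)) - 3 * ∫ v in Tri c, u v
      ≤ c * (1 + (c - 1) * (1 - t) ^ 2) / 6 := by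
  have hc₀ : 0 < c := by linarith
  have hu_cont := hu.continuous
  have hint := integrableOn_tri hc₀ hu_cont
  have hcut : MeasurableSet {v : ℝ × ℝ | v.1 ≤ c * t} :=
    measurableSet_le measurable_fst measurable_const
  have setIntegral_mono {A B : Set (ℝ × ℝ)} (hAB : A ⊆ B) (hB : B ⊆ Tri c)
      (hB_meas : MeasurableSet B) : ∫ v in A, u v ≤ ∫ v in B, u v :=
    setIntegral_mono_set (hint.mono_set hB)
      (ae_restrict_of_forall_mem hB_meas fun v hv ↦ hu₀ v (hB hv)) hAB.eventuallyLE
  have hleft := (hu.le_setIntegral_leftFan hc₀ ht₀).trans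
    (setIntegral_mono (image_leftFan_subset hc₀ ht.le) Set.inter_subset_left
      ((measurableSet_tri c).inter hcut))
  have hright := (hu.le_setIntegral_rightFan hc ht.le hkink).trans
    (setIntegral_mono (image_rightFan_subset hc ht₀ ht hkink) Set.sdiff_subset
      ((measurableSet_tri c).diff hcut))
  have hsplit := integral_inter_add_sdiff hcut hint
  have hedge : (∫ s in (0 : ℝ)..t, u (edge c s)) + ∫ s in t..1, u (edge c s)
      = ∫ s in (0 : ℝ)..1, u (edge c s) :=
    intervalIntegral.integral_add_adjacent_intervals
      (Continuous.intervalIntegrable (by fun_prop) _ _)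
      (Continuous.intervalIntegrable (by fun_prop) _ _)
  rw [← hedge]
  linarith

/-- for `c > 4/3`, every IC and IR direct mechanism on the
triangle `Tri c` with the uniform distribution has revenue at most
`(2/27) * (4 + c + √(c(c-1)))`. -/
theorem triangle_revenue_le (c : ℝ) (hc : 4 / 3 < c)
    (x : ℝ × ℝ → ℝ × ℝ) (p : ℝ × ℝ → ℝ)
    (hx : ∀ v ∈ Tri c, (x v).1 ∈ Set.Icc (0 : ℝ) 1 ∧ (x v).2 ∈ Set.Icc (0 : ℝ) 1)
    (hIC : ∀ v ∈ Tri c, ∀ v' ∈ Tri c,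
      v.1 * (x v').1 + v.2 * (x v').2 - p v' ≤ v.1 * (x v).1 + v.2 * (x v).2 - p v)
    (hIR : ∀ v ∈ Tri c, 0 ≤ v.1 * (x v).1 + v.2 * (x v).2 - p v) :
    ∫ v, p v ∂(triMeasure c) ≤ (2 / 27) * (4 + c + Real.sqrt (c * (c - 1))) := by
  have hc₀ : 0 < c := by linarith
  have hc₁ : 1 < c := by linarith
  have hM : IsICMechanism (Tri c) x p := ⟨hx, hIC⟩
  have hu : UnitSlope (indirectUtility (Tri c) x p) :=
    hM.unitSlope_indirectUtility ⟨_, edge_mem_tri hc₀ ⟨le_rfl, zero_le_one⟩⟩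
  have hu₀ : ∀ v ∈ Tri c, 0 ≤ indirectUtility (Tri c) x p v := fun v hv ↦
    (hIR v hv).trans_eq (hM.indirectUtility_eq hv).symm
  calc ∫ v, p v ∂(triMeasure c) = 2 / c * ∫ v in Tri c, p v := by
        rw [triMeasure, integral_smul_measure, ENNReal.toReal_ofReal (by positivity), smul_eq_mul]
    _ ≤ 2 / c * (c * (1 + (c - 1) * (1 - kink c) ^ 2) / 6) := by
        rw [hM.setIntegral_tri_payment hc₀]
        gcongr
        exact hu.integral_edge_sub_setIntegral_tri_le hu₀ hc₁ (kink_nonneg hc.le)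
          (kink_lt_two_thirds hc₁) (mul_sq_two_thirds_sub_kink hc₁)
    _ = 2 / 27 * (4 + c + √(c * (c - 1))) := by
        rw [mul_one_sub_kink_sq hc₁]
        field_simp
        ring
end
end

section
/- Let 1 ≤ c ≤ 4/3. The menu M = {((0,0),0), ((1,1),sqrt(c/3))}, which posts price sqrt(c/3) for the bundle of both items, has revenue exactly (2/3)*sqrt(c/3) under the uniform distribution μ on the triangle T = {(v1,v2) : v1 ≥ 0, v2 ≥ 0, v1/c + v2 ≤ 1}. -/
open MeasureTheory Real

noncomputable section

/-!
A buyer facing a single non-trivial item buys exactly when its utility is nonnegative, so the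
revenue of the bundle at price `p` is `p` times the probability that `p ≤ v₁ + v₂`. The buyers who
refuse, `v₁ + v₂ < p`, fill the right triangle with both legs `p` up to its hypotenuse, and for
`p ≤ 1` and `p ≤ c` it lies inside `Tri c`; comparing areas, the revenue is `p * (1 - p ^ 2 / c)`.
At its maximizer `p = √(c / 3)` this is `(2 / 3) * √(c / 3)`.
-/

theorem util_zero (v : ℝ × ℝ) : util v ((0, 0), 0) = 0 := by
  simp [util]

theorem measurableSet_util_nonneg (it : (ℝ × ℝ) × ℝ) : MeasurableSet {v | 0 ≤ util v it} := by
  unfold util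
  exact measurableSet_le (by fun_prop) (by fun_prop)

theorem buyerPrice_of_util_nonneg {it : (ℝ × ℝ) × ℝ} (hprice : 0 ≤ it.2) {v : ℝ × ℝ}
    (hv : 0 ≤ util v it) : buyerPrice {((0, 0), 0), it} v = it.2 := by
  refine IsGreatest.csSup_eq ⟨⟨it, by simp, rfl, ?_⟩, ?_⟩
  · simpa [util_zero] using hv
  · rintro _ ⟨chosen, hmem, rfl, -⟩
    obtain rfl | rfl : chosen = ((0, 0), 0) ∨ chosen = it := by simpa using hmem
    exacts [hprice, le_rfl]

theorem buyerPrice_of_util_neg {it : (ℝ × ℝ) × ℝ} {v : ℝ × ℝ} (hv : util v it < 0) :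
    buyerPrice {((0, 0), 0), it} v = 0 := by
  refine IsGreatest.csSup_eq ⟨⟨((0, 0), 0), by simp, rfl, ?_⟩, ?_⟩
  · simpa [util_zero] using hv.le
  · rintro _ ⟨chosen, hmem, rfl, hoptimal⟩
    obtain rfl | rfl : chosen = ((0, 0), 0) ∨ chosen = it := by simpa using hmem
    · exact le_rfl
    · have hnonneg := hoptimal ((0, 0), 0) (by simp)
      rw [util_zero] at hnonneg
      exact absurd hnonneg hv.not_ge

theorem integral_buyerPrice_single_item (μ : Measure (ℝ × ℝ)) {it : (ℝ × ℝ) × ℝ}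
    (hprice : 0 ≤ it.2) :
    ∫ v, buyerPrice {((0, 0), 0), it} v ∂μ = μ.real {v | 0 ≤ util v it} * it.2 := by
  have hprice_eq : buyerPrice {((0, 0), 0), it} =
      {v | 0 ≤ util v it}.indicator fun _ => it.2 := by
    ext v
    by_cases hv : 0 ≤ util v it
    · rw [buyerPrice_of_util_nonneg hprice hv, Set.indicator_of_mem (by exact hv)]
    · rw [buyerPrice_of_util_neg (not_le.mp hv), Set.indicator_of_notMem (by exact hv)]
  rw [hprice_eq, integral_indicator_const _ (measurableSet_util_nonneg it), smul_eq_mul]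

/-- The solid right triangle with vertices `(0, 0)`, `(a, 0)` and `(0, b)`, meant for nonzero legs
`a` and `b`. It covers both `Tri c` and the buyers with total value at most a given price. -/
def rightTriangle (a b : ℝ) : Set (ℝ × ℝ) :=
  {v | 0 ≤ v.1 ∧ 0 ≤ v.2 ∧ v.1 / a + v.2 / b ≤ 1}

theorem tri_eq_rightTriangle (c : ℝ) : Tri c = rightTriangle c 1 := by
  simp only [Tri, rightTriangle, div_one]

theorem measurableSet_rightTriangle (a b : ℝ) : MeasurableSet (rightTriangle a b) := by
  unfold rightTriangle
  measurability

theorem preimage_mk_rightTriangle {a b x : ℝ} (ha : 0 < a) (hb : 0 < b) :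
    Prod.mk x ⁻¹' rightTriangle a b =
      if x ∈ Set.Icc 0 a then Set.Icc 0 (b * (1 - x / a)) else ∅ := by
  ext y
  have hheight : x / a + y / b ≤ 1 ↔ y ≤ b * (1 - x / a) := by
    rw [← le_sub_iff_add_le', div_le_iff₀' hb]
  split_ifs with hx
  · simp [rightTriangle, hheight, hx.1]
  · refine iff_of_false (fun ⟨hx0, hy0, hsum⟩ => hx ⟨hx0, ?_⟩) (Set.notMem_empty y)
    have hy : 0 ≤ y / b := div_nonneg hy0 hb.le
    exact (div_le_one ha).mp (by linarith)

theorem integral_height_rightTriangle {a : ℝ} (ha : a ≠ 0) (b : ℝ) :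
    ∫ x in (0)..a, b * (1 - x / a) = a * b / 2 := by
  rw [intervalIntegral.integral_const_mul,
    intervalIntegral.integral_sub (by simp) (Continuous.intervalIntegrable (by fun_prop) _ _)]
  simp only [intervalIntegral.integral_const, intervalIntegral.integral_div, integral_id,
    smul_eq_mul]
  field_simp
  ring

theorem volume_rightTriangle {a b : ℝ} (ha : 0 < a) (hb : 0 < b) :
    volume (rightTriangle a b) = ENNReal.ofReal (a * b / 2) := by
  have hsection (x : ℝ) : volume (Prod.mk x ⁻¹' rightTriangle a b) =
      (Set.Icc 0 a).indicator (fun x => ENNReal.ofReal (b * (1 - x / a))) x := by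
    rw [preimage_mk_rightTriangle ha hb]
    by_cases hx : x ∈ Set.Icc 0 a <;> simp [hx]
  have hheight_nonneg : ∀ x ∈ Set.Icc 0 a, 0 ≤ b * (1 - x / a) := fun x hx =>
    mul_nonneg hb.le (sub_nonneg.mpr ((div_le_one ha).mpr hx.2))
  calc volume (rightTriangle a b)
      = ∫⁻ x in Set.Icc 0 a, ENNReal.ofReal (b * (1 - x / a)) := by
        rw [Measure.volume_eq_prod, Measure.prod_apply (measurableSet_rightTriangle a b)]
        simp_rw [hsection]
        rw [lintegral_indicator measurableSet_Icc]
    _ = ENNReal.ofReal (∫ x in Set.Icc 0 a, b * (1 - x / a)) :=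
        (ofReal_integral_eq_lintegral_ofReal
          (Continuous.integrableOn_Icc (by fun_prop))
          (ae_restrict_of_forall_mem measurableSet_Icc hheight_nonneg)).symm
    _ = ENNReal.ofReal (a * b / 2) := by
        rw [integral_Icc_eq_integral_Ioc, ← intervalIntegral.integral_of_le ha.le,
          integral_height_rightTriangle ha.ne']

theorem volume_setOf_fst_add_snd_eq (p : ℝ) : volume {v : ℝ × ℝ | v.1 + v.2 = p} = 0 := by
  have hmeas : MeasurableSet {v : ℝ × ℝ | v.1 + v.2 = p} :=
    measurableSet_eq_fun (by fun_prop) (by fun_prop)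
  rw [Measure.volume_eq_prod, Measure.measure_prod_null hmeas]
  refine Filter.Eventually.of_forall fun x => ?_
  have hsection : Prod.mk x ⁻¹' {v : ℝ × ℝ | v.1 + v.2 = p} = {p - x} := by
    ext y
    simp [eq_sub_iff_add_eq']
  simp [hsection]

section UniformTriangle

variable {c p : ℝ}

theorem isProbabilityMeasure_triMeasure (hc : 0 < c) : IsProbabilityMeasure (triMeasure c) where
  measure_univ := by
    rw [triMeasure, Measure.smul_apply, Measure.restrict_apply_univ, tri_eq_rightTriangle,
      volume_rightTriangle hc one_pos, smul_eq_mul, ← ENNReal.ofReal_mul (by positivity),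
      ← ENNReal.ofReal_one]
    congr 1
    field_simp

theorem setOf_fst_add_snd_lt_inter_tri (hp0 : 0 < p) (hp1 : p ≤ 1) (hpc : p ≤ c) :
    {v : ℝ × ℝ | v.1 + v.2 < p} ∩ Tri c = rightTriangle p p \ {v | v.1 + v.2 = p} := by
  have hlegs (v : ℝ × ℝ) : v.1 / p + v.2 / p ≤ 1 ↔ v.1 + v.2 ≤ p := by
    rw [← add_div, div_le_one hp0]
  ext v
  constructor
  · rintro ⟨hlt : v.1 + v.2 < p, hv1, hv2, -⟩
    exact ⟨⟨hv1, hv2, (hlegs v).mpr hlt.le⟩, hlt.ne⟩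
  · rintro ⟨⟨hv1, hv2, hle⟩, hne⟩
    refine ⟨((hlegs v).mp hle).lt_of_ne hne, hv1, hv2, ?_⟩
    calc v.1 / c + v.2 ≤ v.1 / p + v.2 / p :=
          add_le_add (div_le_div_of_nonneg_left hv1 hp0 hpc) (le_div_self hv2 hp0 hp1)
      _ ≤ 1 := hle

theorem triMeasure_real_setOf_fst_add_snd_lt (hp0 : 0 < p) (hp1 : p ≤ 1) (hpc : p ≤ c) :
    (triMeasure c).real {v | v.1 + v.2 < p} = p ^ 2 / c := by
  have hc : 0 < c := hp0.trans_le hpc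
  have hmeas : MeasurableSet {v : ℝ × ℝ | v.1 + v.2 < p} :=
    measurableSet_lt (by fun_prop) (by fun_prop)
  rw [triMeasure, measureReal_ennreal_smul_apply, measureReal_restrict_apply hmeas,
    setOf_fst_add_snd_lt_inter_tri hp0 hp1 hpc, measureReal_def,
    measure_sdiff_null (volume_setOf_fst_add_snd_eq p), volume_rightTriangle hp0 hp0,
    ENNReal.toReal_ofReal (by positivity), ENNReal.toReal_ofReal (by positivity)]
  field_simp

theorem revTri_bundle (hp0 : 0 < p) (hp1 : p ≤ 1) (hpc : p ≤ c) :
    revTri c {((0, 0), 0), ((1, 1), p)} = p * (1 - p ^ 2 / c) := by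
  have := isProbabilityMeasure_triMeasure (hp0.trans_le hpc)
  have hbuyers : {v | 0 ≤ util v ((1, 1), p)} = {v : ℝ × ℝ | v.1 + v.2 < p}ᶜ := by
    ext v
    simp [util]
  rw [revTri, integral_buyerPrice_single_item _ hp0.le, hbuyers,
    probReal_compl_eq_one_sub (measurableSet_lt (by fun_prop) (by fun_prop)),
    triMeasure_real_setOf_fst_add_snd_lt hp0 hp1 hpc, mul_comm]

end UniformTriangle

theorem triangle_bundle_menu_revenue_general (c : ℝ) (hc1 : 1 / 3 ≤ c) (hc2 : c ≤ 3) :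
    revTri c {((0, 0), 0), ((1, 1), √(c / 3))} = (2 / 3) * √(c / 3) := by
  have hc : 0 < c := by linarith
  have hprice_le_one : √(c / 3) ≤ 1 := Real.sqrt_le_one.mpr (by linarith)
  have hprice_le_c : √(c / 3) ≤ c := Real.sqrt_le_iff.mpr ⟨hc.le, by nlinarith⟩
  rw [revTri_bundle (by positivity) hprice_le_one hprice_le_c, Real.sq_sqrt (by positivity)]
  field_simp
  ring

/-- for `1 ≤ c ≤ 4/3`, the menu `{((0,0),0), ((1,1),√(c/3))}`,
posting price `√(c/3)` for the bundle, has revenue exactly `(2/3) * √(c/3)`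
under the uniform distribution on the triangle `Tri c`. -/
theorem triangle_bundle_menu_revenue (c : ℝ) (hc1 : 1 ≤ c) (hc2 : c ≤ 4 / 3) :
    revTri c {(((0 : ℝ), (0 : ℝ)), (0 : ℝ)),
              (((1 : ℝ), (1 : ℝ)), Real.sqrt (c / 3))}
      = (2 / 3) * Real.sqrt (c / 3) :=
  triangle_bundle_menu_revenue_general c (by linarith) (by linarith)
end
end
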